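/- For n, k ≥ 1, the polynomial a_n^{(k)}(x) of the symmetric decomposition A_n^{(k)}(x) = a_n^{(k)}(x) + x·b_n^{(k)}(x) is γ-positive with center (n−1)/2: a_n^{(k)}(x) = Σ_{i=0}^{⌊(n-1)/2⌋} γ̄_{n,k,i} x^i (1+x)^{n−1−2i}, where γ̄_{n,k,i} counts increasing pruned even k-ary forests F on {1,...,n}, belonging to the class where the rightmost tree is a singleton or has its first k−1 root-children as leaves, with i old leaves, no young leaves, and no removable old leaves. -/

import Mathlib

open Polynomial
open scoped Classical

noncomputable section

/-!  Increasing pruned even `k`-ary forests on a linearly ordered label set `α` are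
encoded by parent functions `f : α → Option (α × Fin k)`: `f x = some (y, s)` means the
labeled node `x` is attached to the `s`-th (unlabeled) child of the labeled node `y`,
and `f x = none` means `x` is the root of a component.  The increasing condition says
that labels of the children of each node increase, so the ordered-tree structure is
determined by `f`; components are ordered by their (increasing) root labels.  -/

/-- The labeled node `u` has a labeled grand child (so it is an internal labeled node
carrying its `k` unlabeled children in the pruned tree). -/
def hasChild {α : Type} {k : ℕ} (f : α → Option (α × Fin k)) (u : α) : Prop :=
  ∃ x s, f x = some (u, s)

/-- `f` encodes an increasing pruned even `k`-ary forest: parents carry smaller labels. -/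
def IsForest {α : Type} [LT α] {k : ℕ} (f : α → Option (α × Fin k)) : Prop :=
  ∀ x y s, f x = some (y, s) → y < x

/-- `f` encodes an increasing pruned even `k`-ary tree: a forest with a unique root. -/
def IsTree {α : Type} [LT α] {k : ℕ} (f : α → Option (α × Fin k)) : Prop :=
  IsForest f ∧ ∃! r, f r = none

/-- `lleaf`: the number of labeled leaves. -/
noncomputable def lleafStat {α : Type} [Fintype α] {k : ℕ}
    (f : α → Option (α × Fin k)) : ℕ :=
  (Finset.univ.filter fun u => ¬ hasChild f u).card

/-- `si`: the number of singleton components (roots that are leaves). -/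
noncomputable def siStat {α : Type} [Fintype α] {k : ℕ}
    (f : α → Option (α × Fin k)) : ℕ :=
  (Finset.univ.filter fun u => f u = none ∧ ¬ hasChild f u).card

/-- A non-root labeled node is old if it carries the greatest label among all the
grand children of its grand parent. -/
def oldNode {α : Type} [LinearOrder α] {k : ℕ}
    (f : α → Option (α × Fin k)) (v : α) : Prop :=
  ∃ y s, f v = some (y, s) ∧ ∀ x : α, (∃ t, f x = some (y, t)) → x ≤ v

/-- A non-root labeled node that is not old is young. -/
def youngNode {α : Type} [LinearOrder α] {k : ℕ}
    (f : α → Option (α × Fin k)) (v : α) : Prop :=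
  (∃ y s, f v = some (y, s)) ∧ ¬ oldNode f v

/-- `oleaf`: the number of old labeled leaves. -/
noncomputable def oleafStat {α : Type} [LinearOrder α] [Fintype α] {k : ℕ}
    (f : α → Option (α × Fin k)) : ℕ :=
  (Finset.univ.filter fun v => oldNode f v ∧ ¬ hasChild f v).card

/-- `oint`: the number of old internal labeled nodes. -/
noncomputable def ointStat {α : Type} [LinearOrder α] [Fintype α] {k : ℕ}
    (f : α → Option (α × Fin k)) : ℕ :=
  (Finset.univ.filter fun v => oldNode f v ∧ hasChild f v).card

/-- `F` has no young leaves. -/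
def NoYoungLeaf {α : Type} [LinearOrder α] {k : ℕ}
    (f : α → Option (α × Fin k)) : Prop :=
  ∀ v : α, ¬ (youngNode f v ∧ ¬ hasChild f v)

/-- The generalized Foata–Strehl transformation `Φ_v`.  If `v` is an old internal node
with grand parent `u`, the subtrees hanging from the `k` children of `v` are transferred
(slotwise) to the corresponding children of `u`, turning `v` into a leaf; if `v` is a
young leaf, all subtrees hanging from the children of `u` whose root labels exceed `v`
are transferred (slotwise) to `k` freshly attached children of `v`; otherwise nothing
happens. -/
noncomputable def phi {α : Type} [LinearOrder α] {k : ℕ} (v : α)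
    (f : α → Option (α × Fin k)) : α → Option (α × Fin k) :=
  match f v with
  | none => f
  | some (u, _) =>
    if ∀ x : α, (∃ t, f x = some (u, t)) → x ≤ v then
      -- `v` is old
      if hasChild f v then
        (fun x => match f x with
          | some (w, j) => if w = v then some (u, j) else some (w, j)
          | none => none)
      else f
    else
      -- `v` is young
      if hasChild f v then f
      else
        (fun x => match f x with
          | some (w, j) => if w = u ∧ v < x then some (v, j) else some (w, j)
          | none => none)

/-- `u` is a removable old leaf of the forest `f`: an old leaf that is a grand child of
the root `r` of its component, the only leaf among the grand children of `r`, the first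
`k-1` children of `r` are leaves, and the label of `u` is smaller than the label of
every later root. -/
def removableOldLeaf {α : Type} [LinearOrder α] {k : ℕ}
    (f : α → Option (α × Fin k)) (u : α) : Prop :=
  oldNode f u ∧ ¬ hasChild f u ∧
  ∃ (r : α) (s : Fin k), f u = some (r, s) ∧ f r = none ∧
    (∀ x : α, (∃ t, f x = some (r, t)) → x ≠ u → hasChild f x) ∧
    (∀ (x : α) (j : Fin k), (j : ℕ) < k - 1 → f x ≠ some (r, j)) ∧
    (∀ r' : α, f r' = none → r < r' → u < r')

/-- `u` is a removable young leaf of the forest `f`: a young leaf that is a grand child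
of the root `r` of the rightmost component such that after applying `Φ_u` the first
`k-1` children of `r` are leaves. -/
noncomputable def removableYoungLeaf {α : Type} [LinearOrder α] {k : ℕ}
    (f : α → Option (α × Fin k)) (u : α) : Prop :=
  youngNode f u ∧ ¬ hasChild f u ∧
  ∃ (r : α) (s : Fin k), f u = some (r, s) ∧ f r = none ∧
    (∀ r' : α, f r' = none → r' ≤ r) ∧
    (∀ (x : α) (j : Fin k), (j : ℕ) < k - 1 → phi u f x ≠ some (r, j))

/-- The forest lies in the class `\overline{𝓕}_n(k)`: the rightmost tree is a singleton
or the first `k-1` children of its root are leaves. -/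
def inBarClass {α : Type} [LinearOrder α] {k : ℕ}
    (f : α → Option (α × Fin k)) : Prop :=
  ∃ r : α, f r = none ∧ (∀ r' : α, f r' = none → r' ≤ r) ∧
    (¬ hasChild f r ∨
      ∀ (x : α) (j : Fin k), (j : ℕ) < k - 1 → f x ≠ some (r, j))

/-- Number of excedances of a permutation of `{1,…,n}`. -/
def excStat {n : ℕ} (σ : Equiv.Perm (Fin n)) : ℕ :=
  (Finset.univ.filter fun i : Fin n => (i : ℕ) < (σ i : ℕ)).card

/-- Number of cycles (including fixed points) in the disjoint cycle decomposition. -/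
def cycStat {n : ℕ} (σ : Equiv.Perm (Fin n)) : ℕ :=
  σ.cycleType.card + (Finset.univ.filter fun i => σ i = i).card

/-- `A_n^{(k)}(x) = Σ_{π ∈ S_n} x^{exc π} k^{n - cyc π}`, the `1/k`-Eulerian polynomial. -/
def Apoly (k n : ℕ) : Polynomial ℝ :=
  ∑ σ : Equiv.Perm (Fin n), X ^ excStat σ * (C (k : ℝ)) ^ (n - cycStat σ)

/-!
A permutation recurrence and the insertion of the largest label give the same recurrence, so the
`1/k`-Eulerian polynomial enumerates forests by leaves that are not roots. The involutions `phi v`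
group the forests into orbits, and summing over orbits rewrites the polynomial as
`∑ x ^ oleaf * (1 + x) ^ oint` over the forests without young leaves. These satisfy
`n = 2 * oleaf + oint + si`, and reflecting the polynomial `A` with respect to `n` turns each term
into `x ^ (oleaf + si) * (1 + x) ^ oint`. On the other hand `A - A.reflect n = (1 - x) * a`, so
`a = ∑ x ^ oleaf * (1 + x) ^ oint * (1 + x + ⋯ + x ^ (si - 1))`.

To absorb the geometric sums, first graft all roots after the last singleton onto it; this leads to
the class of `inBarClass`. The remaining singletons `u` are then treated from the largest label
down, using `(1 + x) * [m + 1] = [m + 2] + x * [m]` for `[m] = 1 + x + ⋯ + x ^ (m - 1)`: the term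
`x * [m]` is accounted for by the forests in which `u` is a removable old leaf, obtained by grafting
the roots up to `u` onto the singleton preceding `u`. Once every label has been treated, only the
forests without removable old leaves remain, weighted by
`x ^ oleaf * (1 + x) ^ (n - 1 - 2 * oleaf)`.
-/

lemma exists_isGreatest {α : Type*} [LinearOrder α] [Finite α] {s : Set α} (hs : s.Nonempty) :
    ∃ m, IsGreatest s m :=
  let ⟨m, hm, hmax⟩ := Set.exists_max_image s id s.toFinite hs
  ⟨m, hm, hmax⟩

lemma sum_eq_sum_of_biUnique {ι κ M : Type*} [AddCommMonoid M] {s : Finset ι} {t : Finset κ}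
    {F : ι → M} {G : κ → M} {R : ι → κ → Prop} (hR : Relator.BiUnique R)
    (hleft : ∀ i ∈ s, ∃ j ∈ t, R i j) (hright : ∀ j ∈ t, ∃ i ∈ s, R i j)
    (hFG : ∀ i ∈ s, ∀ j ∈ t, R i j → F i = G j) : ∑ i ∈ s, F i = ∑ j ∈ t, G j := by
  choose e het heR using hleft
  refine Finset.sum_bij e het (fun i hi i' hi' h => ?_) (fun j hj => ?_)
    fun i hi => hFG i hi _ (het i hi) (heR i hi)
  · exact hR.1 (heR i hi) (h ▸ heR i' hi')
  · obtain ⟨i, hi, hij⟩ := hright j hj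
    exact ⟨i, hi, hR.2 (heR i hi) hij⟩

/-- Parent functions on the label set `α`, the encoding of pruned even `k`-ary forests. -/
abbrev ParentMap (α : Type) (k : ℕ) : Type := α → Option (α × Fin k)

/-- The increasing pruned even `k`-ary forests on the label set `α`. -/
def forests (α : Type) [LinearOrder α] [Fintype α] (k : ℕ) : Finset (ParentMap α k) :=
  Finset.univ.filter fun f => IsForest f

lemma mem_forests {α : Type} [LinearOrder α] [Fintype α] {k : ℕ} {f : ParentMap α k} :
    f ∈ forests α k ↔ IsForest f := by
  simp [forests]

/-- The number of leaves that are not roots. -/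
def nonrootLeafCount {α : Type} [Fintype α] {k : ℕ} (f : ParentMap α k) : ℕ :=
  (Finset.univ.filter fun u => f u ≠ none ∧ ¬ hasChild f u).card

/-! ### The recurrence of the `1/k`-Eulerian polynomials -/

section EulerStep

variable {R : Type*} [CommRing R]

/-- The differential operator carrying the `n`-th `1/k`-Eulerian polynomial to the next one. -/
def eulerStep (k n : ℕ) : R[X] →ₗ[R] R[X] :=
  LinearMap.mulLeft R (1 + (k * n : R[X]) * X) +
    LinearMap.mulLeft R ((k : R[X]) * X * (1 - X)) ∘ₗ derivative

lemma eulerStep_mul_C (k n : ℕ) (p : R[X]) (c : R) :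
    eulerStep k n (p * C c) = eulerStep k n p * C c := by
  rw [mul_comm, ← smul_eq_C_mul, map_smul, smul_eq_C_mul, mul_comm]

lemma eulerStep_apply (k n : ℕ) (p : R[X]) :
    eulerStep k n p = (1 + (k * n : R[X]) * X) * p + (k : R[X]) * X * (1 - X) * derivative p :=
  rfl

lemma eulerStep_X_pow (k n e : ℕ) :
    eulerStep k n (X ^ e : R[X]) =
      X ^ e + (k : R[X]) * ((e : R[X]) * X ^ e + ((n : R[X]) - (e : R[X])) * X ^ (e + 1)) := by
  rw [eulerStep_apply]
  rcases e with _ | e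
  · rw [pow_zero, derivative_one, Nat.cast_zero]
    ring
  · rw [derivative_X_pow_succ, map_add, map_natCast, map_one, Nat.cast_succ]
    ring

lemma card_filter_and_ne_add_one {ι : Type*} [Fintype ι] [DecidableEq ι] (p : ι → Prop)
    [DecidablePred p] (i : ι) :
    (Finset.univ.filter fun j => p j ∧ j ≠ i).card + 1 =
      if p i then (Finset.univ.filter p).card else (Finset.univ.filter p).card + 1 := by
  have herase : (Finset.univ.filter fun j => p j ∧ j ≠ i) = (Finset.univ.filter p).erase i := by
    ext j
    simp [and_comm]
  rw [herase]
  split_ifs with hi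
  · exact Finset.card_erase_add_one (by simpa using hi)
  · rw [Finset.erase_eq_of_notMem (by simpa using hi)]

lemma eulerStep_X_pow_card {ι : Type*} [Fintype ι] [DecidableEq ι] (k : ℕ) (p : ι → Prop)
    [DecidablePred p] :
    eulerStep k (Fintype.card ι) (X ^ (Finset.univ.filter p).card : R[X]) =
      X ^ (Finset.univ.filter p).card +
        (k : R[X]) * ∑ i, X ^ ((Finset.univ.filter fun j => p j ∧ j ≠ i).card + 1) := by
  have hcompl : ((Finset.univ.filter fun i => ¬ p i).card : R[X]) =
      Fintype.card ι - (Finset.univ.filter p).card := by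
    rw [eq_sub_iff_add_eq', ← Finset.card_univ,
      ← Finset.card_filter_add_card_filter_not (s := Finset.univ) p, Nat.cast_add]
  simp only [card_filter_and_ne_add_one, eulerStep_X_pow, pow_ite, Finset.sum_ite,
    Finset.sum_const, nsmul_eq_mul, hcompl]

end EulerStep

section InsertLast

variable {n k : ℕ} (f : ParentMap (Fin n) k) (o : Option (Fin n × Fin k))

/-- A parent or slot assignment on `Fin n`, read in `Fin (n + 1)`. -/
def liftParent : Option (Fin n × Fin k) ↪ Option (Fin (n + 1) × Fin k) :=
  (Fin.castSuccEmb.prodMap (Function.Embedding.refl _)).optionMap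

/-- The forest obtained by adding a new largest label, with parent and slot given by `o`. -/
def insertLast : ParentMap (Fin (n + 1)) k :=
  Fin.snoc (α := fun _ => Option (Fin (n + 1) × Fin k)) (fun i => liftParent (f i)) (liftParent o)

@[simp]
lemma insertLast_last : insertLast f o (Fin.last n) = liftParent o := by
  simp [insertLast]

@[simp]
lemma insertLast_castSucc (i : Fin n) : insertLast f o i.castSucc = liftParent (f i) := by
  simp [insertLast]

@[simp]
lemma liftParent_eq_none_iff {o : Option (Fin n × Fin k)} : liftParent o = none ↔ o = none := by
  simp [liftParent]

lemma liftParent_eq_some_iff {o : Option (Fin n × Fin k)} {y : Fin (n + 1)} {s : Fin k} :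
    liftParent o = some (y, s) ↔ ∃ z : Fin n, o = some (z, s) ∧ z.castSucc = y := by
  simp [liftParent]

lemma exists_liftParent_eq {o : Option (Fin (n + 1) × Fin k)}
    (h : ∀ y s, o = some (y, s) → y < Fin.last n) : ∃ o', liftParent o' = o := by
  rcases o with _ | ⟨y, s⟩
  · exact ⟨none, rfl⟩
  · exact ⟨some (y.castPred (h y s rfl).ne, s), by simp [liftParent]⟩

lemma not_hasChild_insertLast_last : ¬ hasChild (insertLast f o) (Fin.last n) := by
  simp [hasChild, Fin.exists_fin_succ', liftParent_eq_some_iff, Fin.castSucc_ne_last]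

lemma hasChild_insertLast_castSucc (y : Fin n) :
    hasChild (insertLast f o) y.castSucc ↔ hasChild f y ∨ ∃ s, o = some (y, s) := by
  simp [hasChild, Fin.exists_fin_succ', liftParent_eq_some_iff]

lemma isForest_insertLast : IsForest (insertLast f o) ↔ IsForest f := by
  simp [IsForest, Fin.forall_fin_succ', liftParent_eq_some_iff, Fin.castSucc_ne_last]

lemma nonrootLeafCount_insertLast_none :
    nonrootLeafCount (insertLast f none) = nonrootLeafCount f := by
  rw [nonrootLeafCount, nonrootLeafCount, Finset.card_filter, Finset.card_filter,
    Fin.sum_univ_castSucc]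
  simp [hasChild_insertLast_castSucc]

lemma nonrootLeafCount_insertLast_some (y : Fin n) (s : Fin k) :
    nonrootLeafCount (insertLast f (some (y, s))) =
      (Finset.univ.filter fun u => (f u ≠ none ∧ ¬ hasChild f u) ∧ u ≠ y).card + 1 := by
  rw [nonrootLeafCount, Finset.card_filter, Finset.card_filter, Fin.sum_univ_castSucc]
  simp [hasChild_insertLast_castSucc, not_hasChild_insertLast_last, and_assoc, @eq_comm _ y]

lemma sum_forests_succ {M : Type*} [AddCommMonoid M] (F : ParentMap (Fin (n + 1)) k → M) :
    ∑ f ∈ forests (Fin (n + 1)) k, F f = ∑ f ∈ forests (Fin n) k, ∑ o, F (insertLast f o) := by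
  rw [← Finset.sum_product']
  symm
  refine Finset.sum_bij (fun p _ => insertLast p.1 p.2) ?_ ?_ ?_ fun _ _ => rfl
  · rintro ⟨f, o⟩ h
    simpa [mem_forests, isForest_insertLast] using h
  · rintro ⟨f, o⟩ _ ⟨f', o'⟩ _ h
    obtain ⟨hf, ho⟩ := (Fin.snoc_inj (α := fun _ => _)).1 h
    exact Prod.ext (funext fun i => liftParent.injective (congrFun hf i))
      (liftParent.injective ho)
  · intro g hg
    have hlift : ∀ x, ∃ o, liftParent o = g x := fun x =>
      exists_liftParent_eq fun y s h => (mem_forests.1 hg x y s h).trans_le (Fin.le_last _)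
    choose o ho using hlift
    have hins : insertLast (fun i => o i.castSucc) (o (Fin.last n)) = g := by
      funext x
      induction x using Fin.lastCases <;> simp [ho]
    refine ⟨(fun i => o i.castSucc, o (Fin.last n)), ?_, hins⟩
    simpa [mem_forests, ← isForest_insertLast _ (o (Fin.last n)), hins] using mem_forests.1 hg

lemma sum_forests_X_pow_succ {R : Type*} [CommRing R] (n k : ℕ) :
    ∑ f ∈ forests (Fin (n + 1)) k, (X ^ nonrootLeafCount f : R[X]) =
      eulerStep k n (∑ f ∈ forests (Fin n) k, X ^ nonrootLeafCount f) := by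
  rw [sum_forests_succ, map_sum]
  refine Finset.sum_congr rfl fun f _ => ?_
  have hstep := eulerStep_X_pow_card (R := R) k fun u => f u ≠ none ∧ ¬ hasChild f u
  rw [Fintype.card_fin] at hstep
  rw [Fintype.sum_option, nonrootLeafCount_insertLast_none, nonrootLeafCount, hstep,
    Fintype.sum_prod_type, Finset.mul_sum]
  simp only [nonrootLeafCount_insertLast_some, Finset.sum_const, Finset.card_univ,
    Fintype.card_fin, nsmul_eq_mul]

end InsertLast

section ReflectionLength

variable {β : Type*} [Fintype β] [DecidableEq β]

/-- The least number of transpositions whose product is `σ`, as the sum of `length - 1` over the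
nontrivial cycles of `σ`; it equals `n - cyc σ`. -/
def reflectionLength (σ : Equiv.Perm β) : ℕ :=
  (σ.cycleType.map fun m => m - 1).sum

lemma reflectionLength_mul {σ τ : Equiv.Perm β} (h : σ.Disjoint τ) :
    reflectionLength (σ * τ) = reflectionLength σ + reflectionLength τ := by
  simp [reflectionLength, h.cycleType_mul]

lemma reflectionLength_of_isCycle {c : Equiv.Perm β} (hc : c.IsCycle) :
    reflectionLength c = c.support.card - 1 := by
  simp [reflectionLength, hc.cycleType]

lemma reflectionLength_add_card_cycleType (σ : Equiv.Perm β) :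
    reflectionLength σ + σ.cycleType.card = σ.support.card := by
  have hcard : σ.cycleType.card = (σ.cycleType.map fun _ => 1).sum := by simp
  have hpos : ∀ m ∈ σ.cycleType, m - 1 + 1 = m := fun m hm =>
    Nat.sub_add_cancel (Equiv.Perm.one_lt_of_mem_cycleType hm).le
  rw [← Equiv.Perm.sum_cycleType, hcard, reflectionLength, ← Multiset.sum_map_add,
    Multiset.map_congr rfl hpos, Multiset.map_id']

lemma sub_cycStat {n : ℕ} (σ : Equiv.Perm (Fin n)) : n - cycStat σ = reflectionLength σ := by
  have hfixed : (Finset.univ.filter fun i => σ i = i).card + σ.support.card = n := by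
    rw [Equiv.Perm.support, Finset.card_filter_add_card_filter_not, Finset.card_univ,
      Fintype.card_fin]
  have hcycle := reflectionLength_add_card_cycleType σ
  rw [cycStat]
  omega

lemma reflectionLength_swap_mul_of_isCycle {c : Equiv.Perm β} (hc : c.IsCycle) {a : β}
    (ha : c a ≠ a) : reflectionLength (Equiv.swap a (c a) * c) + 1 = reflectionLength c := by
  by_cases h : c (c a) = a
  · have hswap : c = Equiv.swap a (c a) := hc.eq_swap_of_apply_apply_eq_self ha h
    have hone : Equiv.swap a (c a) * c = 1 := by
      nth_rw 2 [hswap]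
      exact Equiv.swap_mul_self _ _
    have hcard : c.support.card = 2 := by
      rw [hswap, Equiv.Perm.card_support_swap ha.symm]
    rw [hone, reflectionLength_of_isCycle hc, hcard]
    simp [reflectionLength]
  · have hcard : (c.support \ {a}).card + 1 = c.support.card := by
      rw [← Finset.erase_eq, Finset.card_erase_add_one (by simpa using ha)]
    have htwo := (hc.swap_mul ha h).two_le_card_support
    rw [reflectionLength_of_isCycle (hc.swap_mul ha h), reflectionLength_of_isCycle hc]
    rw [Equiv.Perm.support_swap_mul_eq _ _ h] at htwo ⊢
    omega

lemma reflectionLength_swap_mul (σ : Equiv.Perm β) {a : β} (ha : σ a ≠ a) :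
    reflectionLength (Equiv.swap a (σ a) * σ) + 1 = reflectionLength σ := by
  set c := σ.cycleOf a with hc_def
  have hmem : c ∈ σ.cycleFactorsFinset :=
    Equiv.Perm.cycleOf_mem_cycleFactorsFinset_iff.2 (by simpa using ha)
  have hc : c.IsCycle := (Equiv.Perm.mem_cycleFactorsFinset_iff.1 hmem).1
  have hca : c a = σ a := by simp [hc_def]
  have hdisj := (Equiv.Perm.disjoint_mul_inv_of_mem_cycleFactorsFinset hmem).symm
  have hfactor : c * (σ * c⁻¹) = σ := by rw [hdisj.commute.eq, inv_mul_cancel_right]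
  have hdisj' : (Equiv.swap a (c a) * c).Disjoint (σ * c⁻¹) := by
    rw [Equiv.Perm.disjoint_iff_disjoint_support] at hdisj ⊢
    refine hdisj.mono_left fun x hx => ?_
    rw [Equiv.Perm.mem_support] at hx ⊢
    intro hcx
    have hxa : x ≠ a := by rintro rfl; exact ha (hca ▸ hcx)
    have hxca : x ≠ c a := by rintro rfl; exact ha (hca ▸ c.injective hcx)
    exact hx (by rw [Equiv.Perm.mul_apply, hcx, Equiv.swap_apply_of_ne_of_ne hxa hxca])
  calc reflectionLength (Equiv.swap a (σ a) * σ) + 1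
      = reflectionLength (Equiv.swap a (c a) * c) + reflectionLength (σ * c⁻¹) + 1 := by
        rw [← reflectionLength_mul hdisj', mul_assoc, hfactor, hca]
    _ = reflectionLength c + reflectionLength (σ * c⁻¹) := by
        rw [← reflectionLength_swap_mul_of_isCycle hc (by rwa [hca])]
        ring
    _ = reflectionLength σ := by rw [← reflectionLength_mul hdisj, hfactor]

end ReflectionLength

section DecomposeFin

variable {n : ℕ} (e : Equiv.Perm (Fin n))

lemma decomposeFin_symm_zero :
    Equiv.Perm.decomposeFin.symm (0, e) = e.extendDomain (finSuccAboveEquiv 0) := by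
  ext x
  cases x using Fin.cases with
  | zero =>
    rw [Equiv.Perm.decomposeFin_symm_apply_zero, Equiv.Perm.extendDomain_apply_not_subtype _ _
      (by simp)]
  | succ i =>
    have hsucc : ∀ j : Fin n, (finSuccAboveEquiv 0 j : Fin (n + 1)) = j.succ := fun _ => rfl
    rw [Equiv.Perm.decomposeFin_symm_apply_succ, ← hsucc i, Equiv.Perm.extendDomain_apply_image,
      hsucc, Equiv.swap_self, Equiv.refl_apply]

lemma reflectionLength_decomposeFin_symm_zero :
    reflectionLength (Equiv.Perm.decomposeFin.symm (0, e)) = reflectionLength e := by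
  rw [decomposeFin_symm_zero, reflectionLength, reflectionLength,
    Equiv.Perm.cycleType_extendDomain]

lemma swap_mul_decomposeFin_symm_succ (p : Fin n) :
    Equiv.swap 0 p.succ * Equiv.Perm.decomposeFin.symm (p.succ, e) =
      Equiv.Perm.decomposeFin.symm (0, e) := by
  ext x
  cases x using Fin.cases <;> simp

lemma reflectionLength_decomposeFin_symm_succ (p : Fin n) :
    reflectionLength (Equiv.Perm.decomposeFin.symm (p.succ, e)) = reflectionLength e + 1 := by
  have hzero : Equiv.Perm.decomposeFin.symm (p.succ, e) 0 = p.succ := by simp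
  rw [← reflectionLength_swap_mul (a := 0) _ (by rw [hzero]; exact Fin.succ_ne_zero p), hzero,
    swap_mul_decomposeFin_symm_succ, reflectionLength_decomposeFin_symm_zero]

lemma excStat_decomposeFin_symm_zero :
    excStat (Equiv.Perm.decomposeFin.symm (0, e)) = excStat e := by
  rw [excStat, excStat, Finset.card_filter, Finset.card_filter, Fin.sum_univ_succ]
  simp

lemma excStat_decomposeFin_symm_succ (i : Fin n) :
    excStat (Equiv.Perm.decomposeFin.symm ((e i).succ, e)) =
      (Finset.univ.filter fun j : Fin n => (j : ℕ) < (e j : ℕ) ∧ j ≠ i).card + 1 := by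
  rw [excStat, Finset.card_filter, Finset.card_filter, Fin.sum_univ_succ, add_comm]
  refine congrArg₂ (· + ·) (Finset.sum_congr rfl fun j _ => ?_) (by simp)
  rw [Equiv.Perm.decomposeFin_symm_apply_succ]
  obtain rfl | hj := eq_or_ne j i
  · simp
  · rw [Equiv.swap_apply_of_ne_of_ne (Fin.succ_ne_zero _) (by simpa using hj)]
    simp [hj]

end DecomposeFin

lemma Apoly_succ (k n : ℕ) : Apoly k (n + 1) = eulerStep k n (Apoly k n) := by
  simp only [Apoly, sub_cycStat]
  rw [map_sum, ← Equiv.sum_comp Equiv.Perm.decomposeFin.symm, Fintype.sum_prod_type_right]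
  refine Finset.sum_congr rfl fun e _ => ?_
  have hstep := eulerStep_X_pow_card (R := ℝ) k fun i : Fin n => (i : ℕ) < (e i : ℕ)
  rw [Fintype.card_fin] at hstep
  rw [Fin.sum_univ_succ, excStat_decomposeFin_symm_zero, reflectionLength_decomposeFin_symm_zero,
    ← Equiv.sum_comp e]
  simp only [excStat_decomposeFin_symm_succ, reflectionLength_decomposeFin_symm_succ,
    ← Finset.sum_mul]
  rw [← C_pow, ← C_pow, eulerStep_mul_C, excStat, hstep, C_pow, C_pow, map_natCast]
  ring

lemma Apoly_eq_sum_forests (k n : ℕ) :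
    Apoly k n = ∑ f ∈ forests (Fin n) k, X ^ nonrootLeafCount f := by
  induction n with
  | zero =>
    have huniv : forests (Fin 0) k = Finset.univ :=
      Finset.filter_true_of_mem fun f _ x => x.elim0
    simp [huniv, Apoly, excStat, nonrootLeafCount]
  | succ n ih => rw [Apoly_succ, sum_forests_X_pow_succ, ih]

/-! ### The generalized Foata–Strehl action -/

section FoataStrehl

variable {α : Type} {k : ℕ} {f : ParentMap α k} {u v w x : α} {j s : Fin k}

lemma hasChild_of_eq_some (hx : f x = some (v, j)) : hasChild f v := ⟨x, j, hx⟩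

variable [LinearOrder α]

/-- Old leaves, the nodes counted by `oleafStat`. -/
def OldLeaf (f : ParentMap α k) (v : α) : Prop := oldNode f v ∧ ¬ hasChild f v

/-- Old internal nodes, the nodes counted by `ointStat`. -/
def OldInternal (f : ParentMap α k) (v : α) : Prop := oldNode f v ∧ hasChild f v

/-- Young leaves, the nodes excluded by `NoYoungLeaf`. -/
def YoungLeaf (f : ParentMap α k) (v : α) : Prop := youngNode f v ∧ ¬ hasChild f v

lemma oldNode_iff_of_eq_some (hv : f v = some (u, s)) :
    oldNode f v ↔ ∀ x, (∃ t, f x = some (u, t)) → x ≤ v := by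
  simp [oldNode, hv]

lemma oldNode.ne_none (h : oldNode f v) : f v ≠ none := by
  obtain ⟨_, _, hv, _⟩ := h
  simp [hv]

lemma noYoungLeaf_iff : NoYoungLeaf f ↔ ∀ v, f v ≠ none → ¬ hasChild f v → oldNode f v := by
  simp only [NoYoungLeaf, youngNode, ← Option.ne_none_iff_exists', ← Prod.exists']
  grind

lemma phi_apply_of_oldInternal (hv : f v = some (u, s)) (h : OldInternal f v) :
    phi v f x = (f x).map fun p => if p.1 = v then (u, p.2) else p := by
  simp only [phi, hv, if_pos ((oldNode_iff_of_eq_some hv).1 h.1), if_pos h.2]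
  rcases f x with _ | ⟨w, j⟩
  · rfl
  · simp only [Option.map_some]
    split_ifs <;> rfl

lemma phi_apply_of_youngLeaf (hv : f v = some (u, s)) (h : YoungLeaf f v) :
    phi v f x = (f x).map fun p => if p.1 = u ∧ v < x then (v, p.2) else p := by
  simp only [phi, hv, if_neg (mt (oldNode_iff_of_eq_some hv).2 h.1.2), if_neg h.2]
  rcases f x with _ | ⟨w, j⟩
  · rfl
  · simp only [Option.map_some]
    split_ifs <;> rfl

lemma phi_eq_self (hy : ¬ YoungLeaf f v) (ho : ¬ OldInternal f v) : phi v f = f := by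
  rcases hv : f v with _ | ⟨u, s⟩
  · simp only [phi, hv]
  · simp only [OldInternal, YoungLeaf, youngNode, oldNode_iff_of_eq_some hv, hv] at hy ho
    simp only [phi, hv]
    split_ifs with hold hchild hchild
    · exact absurd ⟨hold, hchild⟩ ho
    · rfl
    · rfl
    · exact absurd ⟨⟨⟨u, s, rfl⟩, hold⟩, hchild⟩ hy

lemma phi_eq_some_iff_of_oldInternal (hv : f v = some (u, s)) (h : OldInternal f v) :
    phi v f x = some (w, j) ↔ (w = u ∧ f x = some (v, j)) ∨ (w ≠ v ∧ f x = some (w, j)) := by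
  rw [phi_apply_of_oldInternal hv h]
  rcases f x with _ | ⟨y, i⟩
  · simp
  · simp only [Option.map_some, Option.some.injEq, Prod.mk.injEq]
    split_ifs with hy <;> grind

lemma phi_eq_some_iff_of_youngLeaf (hv : f v = some (u, s)) (h : YoungLeaf f v) :
    phi v f x = some (w, j) ↔
      (w = v ∧ v < x ∧ f x = some (u, j)) ∨ ((w = u → x ≤ v) ∧ f x = some (w, j)) := by
  rw [phi_apply_of_youngLeaf hv h]
  rcases f x with _ | ⟨y, i⟩
  · simp
  · simp only [Option.map_some, Option.some.injEq, Prod.mk.injEq]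
    split_ifs with hy <;> grind

lemma OldInternal.exists_eq_some (h : OldInternal f v) : ∃ u s, f v = some (u, s) :=
  let ⟨u, s, hv, _⟩ := h.1
  ⟨u, s, hv⟩

lemma phi_eq_none_iff : phi v f x = none ↔ f x = none := by
  by_cases hy : YoungLeaf f v
  · obtain ⟨u, s, hv⟩ := hy.1.1
    simp [phi_apply_of_youngLeaf hv hy]
  by_cases ho : OldInternal f v
  · obtain ⟨u, s, hv⟩ := ho.exists_eq_some
    simp [phi_apply_of_oldInternal hv ho]
  · rw [phi_eq_self hy ho]

lemma IsForest.phi (hf : IsForest f) : IsForest (phi v f) := by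
  intro x w j hx
  by_cases hy : YoungLeaf f v
  · obtain ⟨u, s, hv⟩ := hy.1.1
    rcases (phi_eq_some_iff_of_youngLeaf hv hy).1 hx with ⟨rfl, hlt, _⟩ | ⟨_, hx⟩
    exacts [hlt, hf _ _ _ hx]
  by_cases ho : OldInternal f v
  · obtain ⟨u, s, hv⟩ := ho.exists_eq_some
    rcases (phi_eq_some_iff_of_oldInternal hv ho).1 hx with ⟨rfl, hx⟩ | ⟨_, hx⟩
    exacts [(hf _ _ _ hv).trans (hf _ _ _ hx), hf _ _ _ hx]
  · rw [phi_eq_self hy ho] at hx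
    exact hf _ _ _ hx

lemma YoungLeaf.exists_gt (h : YoungLeaf f v) (hv : f v = some (u, s)) :
    ∃ x t, f x = some (u, t) ∧ v < x := by
  have hyoung := mt (oldNode_iff_of_eq_some hv).2 h.1.2
  push Not at hyoung
  obtain ⟨x, ⟨t, hx⟩, hlt⟩ := hyoung
  exact ⟨x, t, hx, hlt⟩

lemma phi_apply_self_of_youngLeaf (hv : f v = some (u, s)) (h : YoungLeaf f v) :
    phi v f v = some (u, s) :=
  (phi_eq_some_iff_of_youngLeaf hv h).2 (.inr ⟨fun _ => le_rfl, hv⟩)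

lemma phi_apply_self_of_oldInternal (hf : IsForest f) (hv : f v = some (u, s))
    (h : OldInternal f v) : phi v f v = some (u, s) :=
  (phi_eq_some_iff_of_oldInternal hv h).2 (.inr ⟨(hf _ _ _ hv).ne, hv⟩)

lemma YoungLeaf.oldInternal_phi (hf : IsForest f) (h : YoungLeaf f v) :
    OldInternal (phi v f) v := by
  obtain ⟨u, s, hv⟩ := h.1.1
  refine ⟨(oldNode_iff_of_eq_some (phi_apply_self_of_youngLeaf hv h)).2 ?_, ?_⟩
  · rintro x ⟨t, hx⟩
    rcases (phi_eq_some_iff_of_youngLeaf hv h).1 hx with ⟨huv, _⟩ | ⟨hle, _⟩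
    exacts [absurd huv (hf _ _ _ hv).ne, hle rfl]
  · obtain ⟨x, t, hx, hlt⟩ := h.exists_gt hv
    exact ⟨x, t, (phi_eq_some_iff_of_youngLeaf hv h).2 (.inl ⟨rfl, hlt, hx⟩)⟩

lemma OldInternal.youngLeaf_phi (hf : IsForest f) (h : OldInternal f v) :
    YoungLeaf (phi v f) v := by
  obtain ⟨u, s, hv⟩ := h.exists_eq_some
  have hself := phi_apply_self_of_oldInternal hf hv h
  refine ⟨⟨⟨u, s, hself⟩, fun hold => ?_⟩, ?_⟩
  · obtain ⟨x, t, hx⟩ := h.2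
    have hxu : phi v f x = some (u, t) := (phi_eq_some_iff_of_oldInternal hv h).2 (.inl ⟨rfl, hx⟩)
    exact (hf _ _ _ hx).not_ge ((oldNode_iff_of_eq_some hself).1 hold x ⟨t, hxu⟩)
  · rintro ⟨x, t, hx⟩
    rcases (phi_eq_some_iff_of_oldInternal hv h).1 hx with ⟨hvu, _⟩ | ⟨hne, _⟩
    exacts [(hf _ _ _ hv).ne hvu.symm, hne rfl]

lemma phi_phi (hf : IsForest f) : phi v (phi v f) = f := by
  by_cases hy : YoungLeaf f v
  · obtain ⟨u, s, hv⟩ := hy.1.1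
    have hself := phi_apply_self_of_youngLeaf hv hy
    refine funext fun x => Option.ext fun ⟨w, j⟩ => ?_
    have hleaf : f x ≠ some (v, j) := mt hasChild_of_eq_some hy.2
    rw [phi_eq_some_iff_of_oldInternal hself (hy.oldInternal_phi hf),
      phi_eq_some_iff_of_youngLeaf hv hy, phi_eq_some_iff_of_youngLeaf hv hy]
    grind
  by_cases ho : OldInternal f v
  · obtain ⟨u, s, hv⟩ := ho.exists_eq_some
    have hself := phi_apply_self_of_oldInternal hf hv ho
    refine funext fun x => Option.ext fun ⟨w, j⟩ => ?_
    have hlt : f x = some (v, j) → v < x := hf _ _ _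
    have hle : f x = some (u, j) → x ≤ v := fun hx => (oldNode_iff_of_eq_some hv).1 ho.1 x ⟨j, hx⟩
    have huv := (hf _ _ _ hv).ne
    rw [phi_eq_some_iff_of_youngLeaf hself (ho.youngLeaf_phi hf),
      phi_eq_some_iff_of_oldInternal hv ho, phi_eq_some_iff_of_oldInternal hv ho]
    grind
  · rw [phi_eq_self hy ho, phi_eq_self hy ho]

lemma hasChild_phi_iff_of_youngLeaf (h : YoungLeaf f v) (hw : w ≠ v) :
    hasChild (phi v f) w ↔ hasChild f w := by
  obtain ⟨u, s, hv⟩ := h.1.1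
  constructor
  · rintro ⟨x, j, hx⟩
    rcases (phi_eq_some_iff_of_youngLeaf hv h).1 hx with ⟨hwv, _⟩ | ⟨_, hx⟩
    exacts [absurd hwv hw, ⟨x, j, hx⟩]
  · rintro ⟨x, j, hx⟩
    obtain rfl | hwu := eq_or_ne w u
    · exact ⟨v, s, phi_apply_self_of_youngLeaf hv h⟩
    · exact ⟨x, j, (phi_eq_some_iff_of_youngLeaf hv h).2 (.inr ⟨(absurd · hwu), hx⟩)⟩

lemma oldNode_phi_iff_of_youngLeaf (h : YoungLeaf f v) (hw : w ≠ v) :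
    oldNode (phi v f) w ↔ oldNode f w := by
  obtain ⟨u, s, hv⟩ := h.1.1
  have hphi : ∀ x y j, _ :=
    fun x y j => phi_eq_some_iff_of_youngLeaf (x := x) (w := y) (j := j) hv h
  have hself := phi_apply_self_of_youngLeaf hv h
  constructor
  · rintro ⟨y, t, hwy, hmax⟩
    rcases (hphi _ _ _).1 hwy with ⟨rfl, hlt, hwu⟩ | ⟨hle, hwy⟩
    · refine (oldNode_iff_of_eq_some hwu).2 fun x ⟨i, hx⟩ => ?_
      obtain hxv | hvx := le_or_gt x y
      exacts [hxv.trans hlt.le, hmax x ⟨i, (hphi _ _ _).2 (.inl ⟨rfl, hvx, hx⟩)⟩]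
    · have hyu : y ≠ u := fun hyu => hw ((hle hyu).antisymm (hmax v ⟨s, hyu ▸ hself⟩))
      exact (oldNode_iff_of_eq_some hwy).2 fun x ⟨i, hx⟩ =>
        hmax x ⟨i, (hphi _ _ _).2 (.inr ⟨(absurd · hyu), hx⟩)⟩
  · rintro ⟨y, t, hwy, hmax⟩
    have hyv : y ≠ v := fun hyv => h.2 ⟨w, t, hyv ▸ hwy⟩
    obtain rfl | hyu := eq_or_ne y u
    · have hvw : v < w := (hmax v ⟨s, hv⟩).lt_of_ne hw.symm
      refine (oldNode_iff_of_eq_some ((hphi _ _ _).2 (.inl ⟨rfl, hvw, hwy⟩))).2 fun x ⟨i, hx⟩ => ?_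
      rcases (hphi _ _ _).1 hx with ⟨_, _, hx⟩ | ⟨_, hx⟩
      exacts [hmax x ⟨i, hx⟩, absurd ⟨x, i, hx⟩ h.2]
    · refine (oldNode_iff_of_eq_some ((hphi _ _ _).2 (.inr ⟨(absurd · hyu), hwy⟩))).2
        fun x ⟨i, hx⟩ => ?_
      rcases (hphi _ _ _).1 hx with ⟨hyv', _⟩ | ⟨_, hx⟩
      exacts [absurd hyv' hyv, hmax x ⟨i, hx⟩]

lemma hasChild_phi_iff (hf : IsForest f) (hw : w ≠ v) : hasChild (phi v f) w ↔ hasChild f w := by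
  by_cases hy : YoungLeaf f v
  · exact hasChild_phi_iff_of_youngLeaf hy hw
  by_cases ho : OldInternal f v
  · rw [← hasChild_phi_iff_of_youngLeaf (ho.youngLeaf_phi hf) hw, phi_phi hf]
  · rw [phi_eq_self hy ho]

lemma oldNode_phi_iff (hf : IsForest f) (hw : w ≠ v) : oldNode (phi v f) w ↔ oldNode f w := by
  by_cases hy : YoungLeaf f v
  · exact oldNode_phi_iff_of_youngLeaf hy hw
  by_cases ho : OldInternal f v
  · rw [← oldNode_phi_iff_of_youngLeaf (ho.youngLeaf_phi hf) hw, phi_phi hf]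
  · rw [phi_eq_self hy ho]

end FoataStrehl

section NodeWeights

variable {α : Type} [LinearOrder α] {k : ℕ} {R : Type*} [CommRing R]
  {f : ParentMap α k} {u v w : α}

/-- The factor of a node in the enumeration of forests by non-root leaves. -/
def leafWeight (f : ParentMap α k) (w : α) : R[X] :=
  if f w ≠ none ∧ ¬ hasChild f w then X else 1

/-- The factor of a node in the γ-expansion, where each Foata–Strehl orbit is represented by its
member without young leaves. -/
def gammaWeight (f : ParentMap α k) (w : α) : R[X] :=
  if YoungLeaf f w then 0 else if OldInternal f w then 1 + X else if OldLeaf f w then X else 1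

lemma leafWeight_phi (hf : IsForest f) (hw : w ≠ v) :
    (leafWeight (phi v f) w : R[X]) = leafWeight f w := by
  simp only [leafWeight, ne_eq, phi_eq_none_iff, hasChild_phi_iff hf hw]

lemma gammaWeight_phi (hf : IsForest f) (hw : w ≠ v) :
    (gammaWeight (phi v f) w : R[X]) = gammaWeight f w := by
  have hsome : (∃ u s, phi v f w = some (u, s)) ↔ ∃ u s, f w = some (u, s) := by
    simpa [Option.ne_none_iff_exists'] using phi_eq_none_iff.not
  have hyoung : YoungLeaf (phi v f) w ↔ YoungLeaf f w := by
    rw [YoungLeaf, YoungLeaf, youngNode, youngNode, hsome, oldNode_phi_iff hf hw,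
      hasChild_phi_iff hf hw]
  have hint : OldInternal (phi v f) w ↔ OldInternal f w := by
    rw [OldInternal, OldInternal, oldNode_phi_iff hf hw, hasChild_phi_iff hf hw]
  have hleaf : OldLeaf (phi v f) w ↔ OldLeaf f w := by
    rw [OldLeaf, OldLeaf, oldNode_phi_iff hf hw, hasChild_phi_iff hf hw]
  simp only [gammaWeight, hyoung, hint, hleaf]

lemma YoungLeaf.leafWeight_eq (h : YoungLeaf f v) : (leafWeight f v : R[X]) = X := by
  obtain ⟨u, s, hv⟩ := h.1.1
  simp [leafWeight, h.2, hv]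

lemma YoungLeaf.gammaWeight_eq (h : YoungLeaf f v) : (gammaWeight f v : R[X]) = 0 :=
  if_pos h

lemma OldInternal.leafWeight_eq (h : OldInternal f v) : (leafWeight f v : R[X]) = 1 := by
  simp [leafWeight, h.2]

lemma OldInternal.gammaWeight_eq (h : OldInternal f v) : (gammaWeight f v : R[X]) = 1 + X := by
  simp [gammaWeight, YoungLeaf, h, h.2]

lemma gammaWeight_eq_leafWeight (hy : ¬ YoungLeaf f v) (ho : ¬ OldInternal f v) :
    (gammaWeight f v : R[X]) = leafWeight f v := by
  have hleaf : OldLeaf f v ↔ f v ≠ none ∧ ¬ hasChild f v := by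
    refine ⟨fun h => ⟨h.1.ne_none, h.2⟩, fun ⟨hv, hleaf⟩ => ⟨by_contra fun hold => ?_, hleaf⟩⟩
    obtain ⟨⟨u, s⟩, hv⟩ := Option.ne_none_iff_exists'.1 hv
    exact hy ⟨⟨⟨u, s, hv⟩, hold⟩, hleaf⟩
  simp only [gammaWeight, leafWeight, if_neg hy, if_neg ho, hleaf]

lemma leafWeight_add_leafWeight_phi (hf : IsForest f) (v : α) :
    (leafWeight f v + leafWeight (phi v f) v : R[X]) =
      gammaWeight f v + gammaWeight (phi v f) v := by
  by_cases hy : YoungLeaf f v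
  · have ho := hy.oldInternal_phi hf
    rw [hy.leafWeight_eq, hy.gammaWeight_eq, ho.leafWeight_eq, ho.gammaWeight_eq]
    ring
  by_cases ho : OldInternal f v
  · have hy := ho.youngLeaf_phi hf
    rw [hy.leafWeight_eq, hy.gammaWeight_eq, ho.leafWeight_eq, ho.gammaWeight_eq]
    ring
  · rw [phi_eq_self hy ho, gammaWeight_eq_leafWeight hy ho]

variable [Fintype α]

/-- The forests without young leaves. -/
def forestsNoYoung (α : Type) [LinearOrder α] [Fintype α] (k : ℕ) : Finset (ParentMap α k) :=
  (forests α k).filter NoYoungLeaf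

lemma mem_forestsNoYoung : f ∈ forestsNoYoung α k ↔ IsForest f ∧ NoYoungLeaf f := by
  simp [forestsNoYoung, mem_forests]

lemma oleafStat_eq_card (f : ParentMap α k) :
    oleafStat f = (Finset.univ.filter (OldLeaf f)).card := by
  rw [oleafStat]
  congr!

lemma ointStat_eq_card (f : ParentMap α k) :
    ointStat f = (Finset.univ.filter (OldInternal f)).card := by
  rw [ointStat]
  congr!

/-- The weight of a forest when the nodes in `S` already carry their γ-factor. -/
def mixedWeight (S : Finset α) (f : ParentMap α k) : R[X] :=
  ∏ w, S.piecewise (gammaWeight f) (leafWeight f) w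

lemma mixedWeight_eq_leafWeight_mul {S : Finset α} (hv : v ∉ S) (f : ParentMap α k) :
    (mixedWeight S f : R[X]) = leafWeight f v *
      ∏ w ∈ Finset.univ.erase v, S.piecewise (gammaWeight f) (leafWeight f) w := by
  rw [mixedWeight, ← Finset.mul_prod_erase _ _ (Finset.mem_univ v),
    Finset.piecewise_eq_of_notMem _ _ _ hv]

lemma mixedWeight_insert (S : Finset α) (v : α) (f : ParentMap α k) :
    (mixedWeight (insert v S) f : R[X]) = gammaWeight f v *
      ∏ w ∈ Finset.univ.erase v, S.piecewise (gammaWeight f) (leafWeight f) w := by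
  rw [mixedWeight, ← Finset.mul_prod_erase _ _ (Finset.mem_univ v), Finset.piecewise_insert_self]
  refine congrArg _ (Finset.prod_congr rfl fun w hw => ?_)
  exact S.piecewise_insert_of_ne _ _ (Finset.ne_of_mem_erase hw)

lemma mixedWeight_add_mixedWeight_phi (hf : IsForest f) {S : Finset α} (hv : v ∉ S) :
    (mixedWeight S f + mixedWeight S (phi v f) : R[X]) =
      mixedWeight (insert v S) f + mixedWeight (insert v S) (phi v f) := by
  have hphi : (∏ w ∈ Finset.univ.erase v,
      S.piecewise (gammaWeight (phi v f)) (leafWeight (phi v f)) w : R[X]) =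
        ∏ w ∈ Finset.univ.erase v, S.piecewise (gammaWeight f) (leafWeight f) w := by
    refine Finset.prod_congr rfl fun w hw => ?_
    have hwv := Finset.ne_of_mem_erase hw
    simp only [Finset.piecewise, leafWeight_phi hf hwv, gammaWeight_phi hf hwv]
  simp only [mixedWeight_eq_leafWeight_mul hv, mixedWeight_insert, hphi, ← add_mul,
    leafWeight_add_leafWeight_phi hf]

lemma sum_mixedWeight_insert {S : Finset α} (hv : v ∉ S) :
    ∑ f ∈ forests α k, (mixedWeight (insert v S) f : R[X]) =
      ∑ f ∈ forests α k, mixedWeight S f := by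
  rw [← sub_eq_zero, ← Finset.sum_sub_distrib]
  refine Finset.sum_involution (fun f _ => phi v f) (fun f hf => ?_) (fun f hf hne hfix => hne ?_)
    (fun f hf => mem_forests.2 (mem_forests.1 hf).phi) fun f hf => phi_phi (mem_forests.1 hf)
  · linear_combination -mixedWeight_add_mixedWeight_phi (R := R) (mem_forests.1 hf) hv
  · have hy : ¬ YoungLeaf f v := fun h => h.2 (hfix ▸ h.oldInternal_phi (mem_forests.1 hf)).2
    have ho : ¬ OldInternal f v := fun h => (hfix ▸ h.youngLeaf_phi (mem_forests.1 hf)).2 h.2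
    rw [mixedWeight_insert, mixedWeight_eq_leafWeight_mul hv, gammaWeight_eq_leafWeight hy ho,
      sub_self]

lemma mixedWeight_empty (f : ParentMap α k) :
    (mixedWeight ∅ f : R[X]) = X ^ nonrootLeafCount f := by
  simp [mixedWeight, leafWeight, Finset.prod_ite, nonrootLeafCount]

lemma mixedWeight_univ (f : ParentMap α k) :
    (mixedWeight Finset.univ f : R[X]) =
      if NoYoungLeaf f then X ^ oleafStat f * (1 + X) ^ ointStat f else 0 := by
  simp only [mixedWeight, Finset.piecewise_univ]
  split_ifs with hf
  · have hsplit : ∀ w, (gammaWeight f w : R[X]) =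
        (if OldLeaf f w then X else 1) * if OldInternal f w then 1 + X else 1 := fun w => by
      have hw : ¬ YoungLeaf f w := hf w
      simp only [gammaWeight, if_neg hw]
      split_ifs with ho hl <;> simp_all [OldInternal, OldLeaf]
    simp only [hsplit, Finset.prod_mul_distrib, Finset.prod_ite, Finset.prod_const, one_pow,
      mul_one, oleafStat_eq_card, ointStat_eq_card]
  · obtain ⟨v, hv⟩ : ∃ v, YoungLeaf f v := by simpa [NoYoungLeaf, YoungLeaf] using hf
    exact Finset.prod_eq_zero (Finset.mem_univ v) hv.gammaWeight_eq

lemma sum_forests_X_pow_eq_sum_forestsNoYoung :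
    ∑ f ∈ forests α k, (X ^ nonrootLeafCount f : R[X]) =
      ∑ f ∈ forestsNoYoung α k, X ^ oleafStat f * (1 + X) ^ ointStat f := by
  have hmixed : ∀ S : Finset α, ∑ f ∈ forests α k, (mixedWeight S f : R[X]) =
      ∑ f ∈ forests α k, mixedWeight ∅ f := fun S => by
    induction S using Finset.induction_on with
    | empty => rfl
    | insert v S hv ih => rw [sum_mixedWeight_insert hv, ih]
  simp only [forestsNoYoung, Finset.sum_filter, ← mixedWeight_univ, hmixed, mixedWeight_empty]

end NodeWeights

section CountNodes

variable {α : Type} [LinearOrder α] [Fintype α] {k : ℕ} {f : ParentMap α k}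

lemma card_hasChild_eq_card_oldNode (f : ParentMap α k) :
    (Finset.univ.filter (hasChild f)).card = (Finset.univ.filter (oldNode f)).card := by
  rw [Finset.card_eq_sum_ones, Finset.card_eq_sum_ones]
  refine sum_eq_sum_of_biUnique (R := fun u v => oldNode f v ∧ ∃ s, f v = some (u, s))
    ⟨?_, ?_⟩ (fun u hu => ?_) (fun v hv => ?_) fun _ _ _ _ _ => rfl
  · rintro u v u' ⟨_, s, hu⟩ ⟨_, s', hu'⟩
    rw [hu, Option.some.injEq, Prod.mk.injEq] at hu'
    exact hu'.1
  · rintro u v v' ⟨hv, s, hu⟩ ⟨hv', s', hu'⟩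
    exact ((oldNode_iff_of_eq_some hu').1 hv' v ⟨s, hu⟩).antisymm
      ((oldNode_iff_of_eq_some hu).1 hv v' ⟨s', hu'⟩)
  · have hchild : {x | ∃ s, f x = some (u, s)}.Nonempty := (Finset.mem_filter.1 hu).2
    obtain ⟨v, ⟨s, hv⟩, hmax⟩ := exists_isGreatest hchild
    have hold : oldNode f v := (oldNode_iff_of_eq_some hv).2 hmax
    exact ⟨v, by simpa using hold, hold, s, hv⟩
  · have hold := (Finset.mem_filter.1 hv).2
    obtain ⟨u, s, hu, _⟩ := id hold
    exact ⟨u, Finset.mem_filter.2 ⟨Finset.mem_univ u, v, s, hu⟩, hold, s, hu⟩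

lemma oleafStat_add_ointStat (f : ParentMap α k) :
    oleafStat f + ointStat f = (Finset.univ.filter (oldNode f)).card := by
  rw [oleafStat, ointStat, add_comm,
    ← Finset.card_filter_add_card_filter_not (s := Finset.univ.filter (oldNode f)) (hasChild f),
    Finset.filter_filter, Finset.filter_filter]

lemma NoYoungLeaf.oleafStat_add_siStat (hf : NoYoungLeaf f) :
    oleafStat f + siStat f = (Finset.univ.filter fun v => ¬ hasChild f v).card := by
  rw [oleafStat, siStat, add_comm,
    ← Finset.card_filter_add_card_filter_not
      (s := Finset.univ.filter fun v => ¬ hasChild f v) (fun v => f v = none),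
    Finset.filter_filter, Finset.filter_filter]
  congr 2
  · simp only [and_comm]
  · refine Finset.filter_congr fun v _ => ⟨fun h => ⟨h.2, h.1.ne_none⟩, fun h => ⟨?_, h.1⟩⟩
    exact noYoungLeaf_iff.1 hf v h.2 h.1

lemma NoYoungLeaf.card_eq (hf : NoYoungLeaf f) :
    Fintype.card α = 2 * oleafStat f + ointStat f + siStat f := by
  have hnodes := Finset.card_filter_add_card_filter_not (s := Finset.univ) (hasChild f)
  rw [Finset.card_univ, card_hasChild_eq_card_oldNode, ← oleafStat_add_ointStat,
    ← hf.oleafStat_add_siStat] at hnodes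
  omega

end CountNodes

/-! ### Grafting roots onto a singleton -/

section Graft

variable {α : Type} {k : ℕ} {f g : ParentMap α (k + 1)} {A : Set α} {r v w x y : α}
  {s : Fin (k + 1)}

/-- The singleton components, counted by `siStat`. -/
def IsSingleton (f : ParentMap α (k + 1)) (v : α) : Prop := f v = none ∧ ¬ hasChild f v

/-- All grand children of `r` hang from its last child, i.e. its other children are leaves. -/
def LastSlotOnly (f : ParentMap α (k + 1)) (r : α) : Prop :=
  ∀ x s, f x = some (r, s) → s = Fin.last k

/-- The labeled nodes attached to some child of `r`. -/
def grandChildren (f : ParentMap α (k + 1)) (r : α) : Set α := {x | ∃ s, f x = some (r, s)}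

/-- Hangs the nodes of `A`, with their subtrees, from the last child of `r`. -/
def graft (r : α) (A : Set α) (f : ParentMap α (k + 1)) : ParentMap α (k + 1) :=
  fun x => if x ∈ A then some (r, Fin.last k) else f x

/-- Turns the grand children of `r` into roots; the inverse of `graft`. -/
def detach (r : α) (f : ParentMap α (k + 1)) : ParentMap α (k + 1) :=
  fun x => if x ∈ grandChildren f r then none else f x

lemma graft_eq_none_iff : graft r A f x = none ↔ f x = none ∧ x ∉ A := by
  by_cases hx : x ∈ A <;> simp [graft, hx]

lemma detach_eq_none_iff : detach r f x = none ↔ f x = none ∨ x ∈ grandChildren f r := by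
  by_cases hx : x ∈ grandChildren f r <;> simp [detach, hx]

lemma detach_eq_some_iff : detach r f x = some (y, s) ↔ f x = some (y, s) ∧ y ≠ r := by
  by_cases hx : x ∈ grandChildren f r
  · obtain ⟨t, ht⟩ := id hx
    simp only [detach, if_pos hx, ht]
    grind
  · simp only [detach, if_neg hx, iff_self_and]
    rintro hy rfl
    exact hx ⟨s, hy⟩

lemma not_hasChild_detach : ¬ hasChild (detach r f) r := by
  simp [hasChild, detach_eq_some_iff]

lemma graft_detach (hr : LastSlotOnly f r) : graft r (grandChildren f r) (detach r f) = f := by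
  funext x
  by_cases hx : x ∈ grandChildren f r
  · obtain ⟨s, hs⟩ := id hx
    rw [graft, if_pos hx, hs, hr x s hs]
  · simp only [graft, detach, if_neg hx]

variable [LinearOrder α]

/-- The situation in which `graft r A f` is used: the singleton `r` receives later roots. -/
structure Graftable (f : ParentMap α (k + 1)) (r : α) (A : Set α) : Prop where
  isSingleton : IsSingleton f r
  eq_none : ∀ x ∈ A, f x = none
  lt : ∀ x ∈ A, r < x

lemma graftable_detach (hf : IsForest f) (hr : f r = none) :
    Graftable (detach r f) r (grandChildren f r) where
  isSingleton := ⟨detach_eq_none_iff.2 (.inl hr), not_hasChild_detach⟩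
  eq_none _ hx := detach_eq_none_iff.2 (.inr hx)
  lt _ := fun ⟨_, hs⟩ => hf _ _ _ hs

lemma IsForest.detach (hf : IsForest f) : IsForest (detach r f) :=
  fun x y s hx => hf x y s (detach_eq_some_iff.1 hx).1

namespace Graftable

variable (h : Graftable f r A)
include h

lemma notMem : r ∉ A := fun hr => (h.lt r hr).false

lemma graft_eq_some_iff :
    graft r A f x = some (y, s) ↔ (x ∈ A ∧ y = r ∧ s = Fin.last k) ∨ f x = some (y, s) := by
  by_cases hx : x ∈ A
  · simp [graft, hx, h.eq_none x hx, eq_comm]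
  · simp [graft, hx]

lemma graft_eq_some_self_iff : graft r A f x = some (r, s) ↔ x ∈ A ∧ s = Fin.last k := by
  have hx : f x ≠ some (r, s) := fun hx => h.isSingleton.2 ⟨x, s, hx⟩
  simp [h.graft_eq_some_iff, hx]

lemma graft_eq_some_iff_of_ne (hy : y ≠ r) : graft r A f x = some (y, s) ↔ f x = some (y, s) := by
  simp [h.graft_eq_some_iff, hy]

lemma grandChildren_graft : grandChildren (graft r A f) r = A := by
  ext x
  simp [grandChildren, h.graft_eq_some_self_iff]

lemma lastSlotOnly_graft : LastSlotOnly (graft r A f) r :=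
  fun _ _ hx => (h.graft_eq_some_self_iff.1 hx).2

lemma detach_graft : detach r (graft r A f) = f := by
  funext x
  rw [detach, h.grandChildren_graft]
  by_cases hx : x ∈ A
  · rw [if_pos hx, h.eq_none x hx]
  · rw [if_neg hx, graft, if_neg hx]

lemma isForest_graft_iff : IsForest (graft r A f) ↔ IsForest f := by
  refine ⟨fun hg => h.detach_graft ▸ hg.detach, fun hf x y s hx => ?_⟩
  rcases h.graft_eq_some_iff.1 hx with ⟨hxA, rfl, _⟩ | hx
  exacts [h.lt x hxA, hf _ _ _ hx]

lemma hasChild_graft_iff : hasChild (graft r A f) w ↔ hasChild f w ∨ (w = r ∧ A.Nonempty) := by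
  simp only [hasChild, h.graft_eq_some_iff, exists_or, Set.Nonempty]
  grind

lemma hasChild_graft_iff_of_ne (hw : w ≠ r) : hasChild (graft r A f) w ↔ hasChild f w := by
  simp [h.hasChild_graft_iff, hw]

lemma hasChild_graft_iff_of_mem (hw : w ∈ A) : hasChild (graft r A f) w ↔ hasChild f w :=
  h.hasChild_graft_iff_of_ne fun hwr => h.notMem (hwr ▸ hw)

lemma isSingleton_graft_iff :
    IsSingleton (graft r A f) v ↔ IsSingleton f v ∧ v ∉ A ∧ (v = r → ¬ A.Nonempty) := by
  simp only [IsSingleton, graft_eq_none_iff, h.hasChild_graft_iff]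
  tauto

lemma oldNode_graft_iff : oldNode (graft r A f) w ↔ oldNode f w ∨ IsGreatest A w := by
  constructor
  · rintro ⟨y, s, hw, hmax⟩
    rcases h.graft_eq_some_iff.1 hw with ⟨hwA, rfl, _⟩ | hw
    · exact .inr ⟨hwA, fun x hx => hmax x ⟨_, h.graft_eq_some_self_iff.2 ⟨hx, rfl⟩⟩⟩
    · exact .inl ⟨y, s, hw, fun x ⟨t, hx⟩ => hmax x ⟨t, h.graft_eq_some_iff.2 (.inr hx)⟩⟩
  · rintro (⟨y, s, hw, hmax⟩ | ⟨hwA, hmax⟩)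
    · have hyr : y ≠ r := fun hyr => h.isSingleton.2 ⟨w, s, hyr ▸ hw⟩
      exact ⟨y, s, (h.graft_eq_some_iff_of_ne hyr).2 hw, fun x ⟨t, hx⟩ =>
        hmax x ⟨t, (h.graft_eq_some_iff_of_ne hyr).1 hx⟩⟩
    · exact ⟨r, _, h.graft_eq_some_self_iff.2 ⟨hwA, rfl⟩, fun x ⟨t, hx⟩ =>
        hmax (h.graft_eq_some_self_iff.1 hx).1⟩

lemma oldLeaf_graft_iff :
    OldLeaf (graft r A f) w ↔ OldLeaf f w ∨ (IsGreatest A w ∧ ¬ hasChild f w) := by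
  have hold : ¬ oldNode f r := fun hr => hr.ne_none h.isSingleton.1
  have hgreatest : ¬ IsGreatest A r := fun hr => h.notMem hr.1
  rw [OldLeaf, OldLeaf, h.oldNode_graft_iff, h.hasChild_graft_iff]
  grind

lemma noYoungLeaf_graft_iff : NoYoungLeaf (graft r A f) ↔
    NoYoungLeaf f ∧ ∀ w ∈ A, ¬ IsGreatest A w → hasChild f w := by
  have hroot : ∀ w ∈ A, ¬ oldNode f w := fun w hw hold => hold.ne_none (h.eq_none w hw)
  have hr := h.isSingleton.1
  have hrA := h.notMem
  simp only [noYoungLeaf_iff, ne_eq, graft_eq_none_iff, h.hasChild_graft_iff, h.oldNode_graft_iff]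
  have hnone := h.eq_none
  refine ⟨fun hg => ⟨fun w hw hleaf => ?_, fun w hw hmax => ?_⟩, fun ⟨_, _⟩ w hw hleaf => ?_⟩
  · have hwA : ¬ IsGreatest A w := fun hwA => hw (hnone w hwA.1)
    grind
  · grind
  · grind

end Graftable

end Graft

section Removable

variable {α : Type} {k : ℕ} {f : ParentMap α (k + 1)} {A : Set α} {q r u v : α}

lemma lastSlotOnly_iff :
    LastSlotOnly f r ↔ ∀ x (j : Fin (k + 1)), (j : ℕ) < k + 1 - 1 → f x ≠ some (r, j) := by
  have hlast : ∀ j : Fin (k + 1), j = Fin.last k ↔ ¬ (j : ℕ) < k + 1 - 1 := fun j => by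
    rw [Fin.ext_iff, Fin.val_last]
    omega
  refine forall₂_congr fun x j => ?_
  rw [hlast, ne_eq, imp_not_comm]

variable [LinearOrder α]

/-- `u` is a removable old leaf, and `q` is the root of its component. -/
structure RemovableAt (f : ParentMap α (k + 1)) (u q : α) : Prop where
  oldLeaf : OldLeaf f u
  mem : u ∈ grandChildren f q
  eq_none : f q = none
  hasChild_of_mem : ∀ x ∈ grandChildren f q, x ≠ u → hasChild f x
  lastSlotOnly : LastSlotOnly f q
  lt : ∀ x, f x = none → q < x → u < x

lemma removableOldLeaf_iff : removableOldLeaf f u ↔ ∃ q, RemovableAt f u q := by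
  constructor
  · rintro ⟨hold, hleaf, q, s, hu, hq, hchild, hlast, hlt⟩
    exact ⟨q, ⟨hold, hleaf⟩, ⟨s, hu⟩, hq, hchild, lastSlotOnly_iff.2 hlast, hlt⟩
  · rintro ⟨q, ⟨hold, hleaf⟩, ⟨s, hu⟩, hq, hchild, hlast, hlt⟩
    exact ⟨hold, hleaf, q, s, hu, hq, hchild, lastSlotOnly_iff.1 hlast, hlt⟩

lemma inBarClass_iff :
    inBarClass f ↔ ∃ r, IsGreatest {x | f x = none} r ∧ LastSlotOnly f r := by
  have hleaf : ∀ r, ¬ hasChild f r → LastSlotOnly f r := fun r hr x s hx => absurd ⟨x, s, hx⟩ hr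
  simp only [inBarClass, ← lastSlotOnly_iff, IsGreatest, upperBounds, Set.mem_ofPred_eq, and_assoc]
  grind

lemma RemovableAt.lt_of_isForest (h : RemovableAt f u q) (hf : IsForest f) : q < u :=
  let ⟨_, hs⟩ := h.mem
  hf _ _ _ hs

namespace Graftable

variable (h : Graftable f r A)
include h

lemma grandChildren_graft_of_ne (hq : q ≠ r) :
    grandChildren (graft r A f) q = grandChildren f q := by
  simp only [grandChildren, h.graft_eq_some_iff_of_ne hq]

lemma lastSlotOnly_graft_iff_of_ne (hq : q ≠ r) :
    LastSlotOnly (graft r A f) q ↔ LastSlotOnly f q := by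
  simp only [LastSlotOnly, h.graft_eq_some_iff_of_ne hq]

lemma removableAt_graft_iff_of_ne (hq : q ≠ r) (hqA : q ∉ A) (hA : ∀ x ∈ A, q < x → u < x) :
    RemovableAt (graft r A f) u q ↔ RemovableAt f u q := by
  have hchild : ∀ x ∈ grandChildren f q, (hasChild (graft r A f) x ↔ hasChild f x) :=
    fun x ⟨s, hx⟩ => h.hasChild_graft_iff_of_ne fun hxr => by simp [hxr, h.isSingleton.1] at hx
  have hleaf : u ∈ grandChildren f q → (OldLeaf (graft r A f) u ↔ OldLeaf f u) := fun ⟨s, hu⟩ => by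
    have hmax : ¬ IsGreatest A u := fun hmax => by simp [h.eq_none u hmax.1] at hu
    rw [h.oldLeaf_graft_iff, or_iff_left fun hu => hmax hu.1]
  have hlt : (∀ x, graft r A f x = none → q < x → u < x) ↔ ∀ x, f x = none → q < x → u < x := by
    simp only [graft_eq_none_iff]
    grind
  constructor
  · rintro ⟨h₁, h₂, h₃, h₄, h₅, h₆⟩
    rw [h.grandChildren_graft_of_ne hq] at h₂ h₄
    exact ⟨(hleaf h₂).1 h₁, h₂, (graft_eq_none_iff.1 h₃).1,
      fun x hx hxu => (hchild x hx).1 (h₄ x hx hxu), (h.lastSlotOnly_graft_iff_of_ne hq).1 h₅,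
      hlt.1 h₆⟩
  · rintro ⟨h₁, h₂, h₃, h₄, h₅, h₆⟩
    have hg := h.grandChildren_graft_of_ne hq
    exact ⟨(hleaf h₂).2 h₁, hg ▸ h₂, graft_eq_none_iff.2 ⟨h₃, hqA⟩,
      hg ▸ fun x hx hxu => (hchild x hx).2 (h₄ x hx hxu), (h.lastSlotOnly_graft_iff_of_ne hq).2 h₅,
      hlt.2 h₆⟩

lemma removableAt_graft_self_iff : RemovableAt (graft r A f) u r ↔
    IsSingleton f u ∧ IsGreatest {w | IsSingleton f w ∧ w < u} r ∧
      A = {x | f x = none ∧ r < x ∧ x ≤ u} := by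
  constructor
  · rintro ⟨hleaf, hu, -, hchild, -, hlt⟩
    rw [h.grandChildren_graft] at hu hchild
    have hmax : IsGreatest A u := (h.oldNode_graft_iff.1 hleaf.1).resolve_left
      fun hold => hold.ne_none (h.eq_none u hu)
    have hA : A = {x | f x = none ∧ r < x ∧ x ≤ u} := by
      refine Set.Subset.antisymm (fun x hx => ⟨h.eq_none x hx, h.lt x hx, hmax.2 hx⟩) ?_
      rintro x ⟨hx, hrx, hxu⟩
      by_contra hxA
      exact (hlt x (graft_eq_none_iff.2 ⟨hx, hxA⟩) hrx).not_ge hxu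
    refine ⟨⟨h.eq_none u hu, (h.hasChild_graft_iff_of_mem hu).not.1 hleaf.2⟩,
      ⟨⟨h.isSingleton, h.lt u hu⟩, fun w ⟨hw, hwu⟩ => ?_⟩, hA⟩
    by_contra! hrw
    have hwA : w ∈ A := hA ▸ ⟨hw.1, hrw, hwu.le⟩
    exact hw.2 ((h.hasChild_graft_iff_of_mem hwA).1 (hchild w hwA hwu.ne))
  · rintro ⟨hu, ⟨⟨-, hru⟩, hr⟩, rfl⟩
    have hmax : IsGreatest {x | f x = none ∧ r < x ∧ x ≤ u} u :=
      ⟨⟨hu.1, hru, le_rfl⟩, fun x hx => hx.2.2⟩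
    refine ⟨h.oldLeaf_graft_iff.2 (.inr ⟨hmax, hu.2⟩), h.grandChildren_graft.symm ▸ hmax.1,
      graft_eq_none_iff.2 ⟨h.isSingleton.1, h.notMem⟩, ?_, h.lastSlotOnly_graft, ?_⟩
    · rw [h.grandChildren_graft]
      rintro x hx hxu
      rw [h.hasChild_graft_iff_of_mem hx]
      by_contra hleaf
      exact (hr ⟨⟨hx.1, hleaf⟩, hx.2.2.lt_of_ne hxu⟩).not_gt hx.2.1
    · intro x hx hrx
      rw [graft_eq_none_iff] at hx
      exact lt_of_not_ge fun hxu => hx.2 ⟨hx.1, hrx, hxu⟩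

lemma isGreatest_root_graft_iff :
    (IsGreatest {x | graft r A f x = none} r ∧ ∀ w ∈ A, hasChild f w) ↔
      IsGreatest {w | IsSingleton f w} r ∧ A = {x | f x = none ∧ r < x} := by
  constructor
  · rintro ⟨⟨-, hr⟩, hA⟩
    have hroot : A = {x | f x = none ∧ r < x} := by
      refine Set.Subset.antisymm (fun x hx => ⟨h.eq_none x hx, h.lt x hx⟩) fun x ⟨hx, hrx⟩ => ?_
      by_contra hxA
      exact (hr (graft_eq_none_iff.2 ⟨hx, hxA⟩)).not_gt hrx
    refine ⟨⟨h.isSingleton, fun w hw => ?_⟩, hroot⟩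
    by_contra! hrw
    exact hw.2 (hA w (hroot ▸ ⟨hw.1, hrw⟩))
  · rintro ⟨⟨-, hr⟩, rfl⟩
    refine ⟨⟨graft_eq_none_iff.2 ⟨h.isSingleton.1, h.notMem⟩, fun x hx => ?_⟩, fun w hw => ?_⟩
    · obtain ⟨hx, hxA⟩ := graft_eq_none_iff.1 hx
      exact le_of_not_gt fun hrx => hxA ⟨hx, hrx⟩
    · by_contra hleaf
      exact (hr ⟨hw.1, hleaf⟩).not_gt hw.2

variable (hu : RemovableAt (graft r A f) u r)
include hu

lemma eq_or_removableAt_of_graft (hv : RemovableAt (graft r A f) v q) :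
    v = u ∨ RemovableAt f v q := by
  obtain ⟨-, -, hA⟩ := h.removableAt_graft_self_iff.1 hu
  obtain ⟨hq, hqA⟩ := graft_eq_none_iff.1 hv.eq_none
  obtain rfl | hqr := eq_or_ne q r
  · refine .inl (by_contra fun hvu => hv.oldLeaf.2 (hu.hasChild_of_mem v hv.mem hvu))
  · refine .inr ((h.removableAt_graft_iff_of_ne hqr hqA fun x hx hqx => ?_).1 hv)
    obtain hlt | hlt := hqr.lt_or_gt
    · exact (hv.lt r hu.eq_none hlt).trans (h.lt x hx)
    · subst hA
      exact absurd ⟨hq, hlt, (hqx.trans_le hx.2.2).le⟩ hqA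

lemma removableAt_of_lt_or_removableAt_graft (hv : RemovableAt f v q) :
    v < u ∨ (RemovableAt (graft r A f) v q ∧ u < q) := by
  obtain ⟨hsu, -, hA⟩ := h.removableAt_graft_self_iff.1 hu
  obtain ⟨s, hs⟩ := hv.mem
  have hqr : q ≠ r := by rintro rfl; exact h.isSingleton.2 ⟨v, s, hs⟩
  have hqu : q ≠ u := by rintro rfl; exact hsu.2 ⟨v, s, hs⟩
  obtain hlt | hlt := hqu.lt_or_gt
  · exact .inl (hv.lt u hsu.1 hlt)
  · have hle : ∀ x ∈ A, x < q := fun x hx => (hA ▸ hx : _ ∧ _).2.2.trans_lt hlt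
    exact .inr ⟨(h.removableAt_graft_iff_of_ne hqr (fun hqA => (hle q hqA).false)
      fun x hx hqx => absurd hqx (hle x hx).not_gt).2 hv, hlt⟩

end Graftable

end Removable

section LaterRoot

variable {α : Type} [LinearOrder α] {k : ℕ} {f : ParentMap α (k + 1)} {A : Set α} {r u v : α}

/-- Some root label exceeds `v`: for a root `v`, its component is not the last one. -/
def HasLaterRoot (f : ParentMap α (k + 1)) (v : α) : Prop := ∃ x, f x = none ∧ v < x

lemma HasLaterRoot.of_le (h : HasLaterRoot f u) (hvu : v ≤ u) : HasLaterRoot f v :=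
  let ⟨x, hx, hux⟩ := h
  ⟨x, hx, hvu.trans_lt hux⟩

lemma hasLaterRoot_graft_iff (hA : ∀ x ∈ A, x ≤ u) :
    HasLaterRoot (graft r A f) u ↔ HasLaterRoot f u := by
  simp only [HasLaterRoot, graft_eq_none_iff]
  grind

namespace Graftable

variable (h : Graftable f r A)
include h

lemma inBarClass_graft_iff (hA : ∀ x ∈ A, x ≤ u) (hru : r < u) (hu : HasLaterRoot f u) :
    inBarClass (graft r A f) ↔ inBarClass f := by
  obtain ⟨m, hm, hum⟩ := hu
  have hgreatest : ∀ x,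
      IsGreatest {x | graft r A f x = none} x ↔ IsGreatest {x | f x = none} x := by
    simp only [IsGreatest, upperBounds, Set.mem_ofPred_eq, graft_eq_none_iff]
    grind
  simp only [inBarClass_iff, hgreatest]
  refine exists_congr fun x => and_congr_right fun hx => h.lastSlotOnly_graft_iff_of_ne ?_
  exact ((hru.trans hum).trans_le (hx.2 hm)).ne'

variable [Fintype α]

lemma oleafStat_graft_of_hasChild (hA : ∀ w ∈ A, hasChild f w) :
    oleafStat (graft r A f) = oleafStat f := by
  rw [oleafStat_eq_card, oleafStat_eq_card]
  congr! 2 with w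
  rw [h.oldLeaf_graft_iff, or_iff_left fun hw => hw.2 (hA w hw.1.1)]

lemma oleafStat_graft_of_isGreatest (hu : IsGreatest A u) (hleaf : ¬ hasChild f u) :
    oleafStat (graft r A f) = oleafStat f + 1 := by
  have hold : ¬ OldLeaf f u := fun hu' => hu'.1.ne_none (h.eq_none u hu.1)
  have hinsert : Finset.univ.filter (OldLeaf (graft r A f)) =
      insert u (Finset.univ.filter (OldLeaf f)) := by
    ext w
    have hw : IsGreatest A w ∧ ¬ hasChild f w ↔ w = u :=
      ⟨fun hw => hw.1.unique hu, fun hw => hw ▸ ⟨hu, hleaf⟩⟩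
    simp [h.oldLeaf_graft_iff, hw, or_comm]
  rw [oleafStat_eq_card, oleafStat_eq_card, hinsert,
    Finset.card_insert_of_notMem (by simpa using hold)]

end Graftable

end LaterRoot

/-! ### Eliminating the removable old leaves -/

section Elimination

variable {α : Type} {k : ℕ} {f g : ParentMap α (k + 1)} {A : Set α} {S : Finset α} {r u v : α}
  {R : Type*} [CommRing R]

variable (R) in
/-- The `q`-analogue `1 + X + ⋯ + X ^ (m - 1)` of `m`. -/
def qNumber (m : ℕ) : R[X] := ∑ i ∈ Finset.range m, X ^ i

lemma one_add_X_mul_qNumber_succ (m : ℕ) :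
    (1 + X) * qNumber R (m + 1) = qNumber R (m + 2) + X * qNumber R m := by
  simp only [qNumber, geom_sum_succ]
  ring

lemma siStat_eq_card [Fintype α] (f : ParentMap α (k + 1)) :
    siStat f = (Finset.univ.filter (IsSingleton f)).card := by
  rw [siStat]
  congr!

variable [LinearOrder α]

/-- The singleton components with label in `S`, other than the last component. -/
def activeSingletons (S : Finset α) (f : ParentMap α (k + 1)) : Finset α :=
  S.filter fun v => IsSingleton f v ∧ HasLaterRoot f v

lemma mem_activeSingletons :
    v ∈ activeSingletons S f ↔ v ∈ S ∧ IsSingleton f v ∧ HasLaterRoot f v := by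
  simp [activeSingletons]

/-- `g` arises from `f` by grafting all roots after the last singleton onto that singleton. -/
def GraftsLast (f g : ParentMap α (k + 1)) : Prop :=
  ∃ r A, Graftable f r A ∧ g = graft r A f ∧ IsGreatest {x | g x = none} r ∧ ∀ x ∈ A, hasChild f x

lemma biUnique_graftsLast :
    Relator.BiUnique (GraftsLast : ParentMap α (k + 1) → ParentMap α (k + 1) → Prop) := by
  constructor
  · rintro f g f' ⟨r, A, h, rfl, hr, -⟩ ⟨r', A', h', hg, hr', -⟩
    obtain rfl := hr.unique hr'
    rw [← h.detach_graft, hg, h'.detach_graft]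
  · rintro f g g' ⟨r, A, h, rfl, hA⟩ ⟨r', A', h', rfl, hA'⟩
    obtain ⟨hr, rfl⟩ := h.isGreatest_root_graft_iff.1 hA
    obtain ⟨hr', rfl⟩ := h'.isGreatest_root_graft_iff.1 hA'
    rw [hr.unique hr']

/-- `g` arises from `f` by grafting the roots up to `u` onto the preceding singleton, which makes
`u` a removable old leaf. -/
def GraftsUpTo (u : α) (f g : ParentMap α (k + 1)) : Prop :=
  ∃ r A, Graftable f r A ∧ g = graft r A f ∧ RemovableAt g u r

lemma biUnique_graftsUpTo : Relator.BiUnique (GraftsUpTo u : ParentMap α (k + 1) → _ → Prop) := by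
  constructor
  · rintro f g f' ⟨r, A, h, rfl, hr⟩ ⟨r', A', h', hg, hr'⟩
    obtain ⟨⟨s, hs⟩, ⟨s', hs'⟩⟩ := hr.mem, hr'.mem
    obtain rfl : r = r' := by simp_all
    rw [← h.detach_graft, hg, h'.detach_graft]
  · rintro f g g' ⟨r, A, h, rfl, hr⟩ ⟨r', A', h', rfl, hr'⟩
    obtain ⟨-, hmax, rfl⟩ := h.removableAt_graft_self_iff.1 hr
    obtain ⟨-, hmax', rfl⟩ := h'.removableAt_graft_self_iff.1 hr'
    rw [hmax.unique hmax']

lemma Graftable.activeSingletons_insert_graft (h : Graftable f r A)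
    (hu : RemovableAt (graft r A f) u r) (hlater : HasLaterRoot f u) (hS : ∀ v, v ∈ S ↔ v < u) :
    activeSingletons (insert u S) (graft r A f) = (activeSingletons S f).erase r := by
  obtain ⟨hsu, ⟨⟨-, hru⟩, hr⟩, rfl⟩ := h.removableAt_graft_self_iff.1 hu
  have hlater' : HasLaterRoot (graft r {x | f x = none ∧ r < x ∧ x ≤ u} f) u :=
    (hasLaterRoot_graft_iff fun x hx => hx.2.2).2 hlater
  ext v
  simp only [mem_activeSingletons, Finset.mem_insert, Finset.mem_erase, h.isSingleton_graft_iff, hS]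
  constructor
  · rintro ⟨hvu, ⟨hv, hvA, hvr⟩, -⟩
    have hvr' : v ≠ r := fun hvr' => hvr hvr' ⟨u, hsu.1, hru, le_rfl⟩
    have hvu' : v < u := hvu.resolve_left fun hvu => hvA ⟨hv.1, hvu ▸ hru, hvu.le⟩
    exact ⟨hvr', hvu', hv, hlater.of_le hvu'.le⟩
  · rintro ⟨hvr, hvu, hv, -⟩
    exact ⟨.inr hvu, ⟨hv, fun hvA => (hr ⟨hv, hvu⟩).not_gt hvA.2.1, fun hvr' => absurd hvr' hvr⟩,
      hlater'.of_le hvu.le⟩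

variable [Fintype α]

/-- The forests without young leaves in the class of `inBarClass` whose removable old leaves lie
in `S` and to the left of the last component. -/
def barForests (k : ℕ) (S : Finset α) : Finset (ParentMap α (k + 1)) :=
  (forestsNoYoung α (k + 1)).filter fun f =>
    inBarClass f ∧ ∀ u, removableOldLeaf f u → u ∈ S ∧ HasLaterRoot f u

lemma mem_barForests : f ∈ barForests k S ↔ (IsForest f ∧ NoYoungLeaf f) ∧
    inBarClass f ∧ ∀ u, removableOldLeaf f u → u ∈ S ∧ HasLaterRoot f u := by
  rw [barForests, Finset.mem_filter, mem_forestsNoYoung]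

variable (R) in
/-- The weight interpolating between the enumeration by singletons and the γ-expansion: each active
singleton trades a factor `1 + X` for a larger `q`-number. -/
def barWeight (S : Finset α) (f : ParentMap α (k + 1)) : R[X] :=
  X ^ oleafStat f *
    (1 + X) ^ (Fintype.card α - 1 - 2 * oleafStat f - (activeSingletons S f).card) *
    qNumber R ((activeSingletons S f).card + 1)

lemma Graftable.hasChild_of_graft_mem_barForests (h : Graftable f r A)
    (hg : graft r A f ∈ barForests k S) (hr : IsGreatest {x | graft r A f x = none} r)
    (hv : v ∈ A) : hasChild f v := by
  obtain ⟨⟨-, hyoung⟩, -, hremovable⟩ := mem_barForests.1 hg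
  have hchild := (h.noYoungLeaf_graft_iff.1 hyoung).2
  by_contra hleaf
  have hmax : IsGreatest A v := by_contra fun hmax => hleaf (hchild v hv hmax)
  have hat : RemovableAt (graft r A f) v r :=
    { oldLeaf := h.oldLeaf_graft_iff.2 (.inr ⟨hmax, hleaf⟩)
      mem := h.grandChildren_graft.symm ▸ hv
      eq_none := hr.1
      hasChild_of_mem := fun x hx hxv => by
        rw [h.grandChildren_graft] at hx
        exact (h.hasChild_graft_iff_of_mem hx).2 (hchild x hx fun hx => hxv (hx.unique hmax))
      lastSlotOnly := h.lastSlotOnly_graft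
      lt := fun x hx hrx => absurd (hr.2 hx) hrx.not_ge }
  obtain ⟨x, hx, hvx⟩ := (hremovable v (removableOldLeaf_iff.2 ⟨r, hat⟩)).2
  exact (hr.2 hx).not_gt ((h.lt v hv).trans hvx)

lemma GraftsLast.mem_barForests_univ (hfg : GraftsLast f g) (hf : f ∈ forestsNoYoung α (k + 1)) :
    g ∈ barForests k Finset.univ := by
  obtain ⟨r, A, h, rfl, hr, hA⟩ := hfg
  obtain ⟨hforest, hyoung⟩ := mem_forestsNoYoung.1 hf
  refine mem_barForests.2 ⟨⟨h.isForest_graft_iff.2 hforest,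
    h.noYoungLeaf_graft_iff.2 ⟨hyoung, fun x hx _ => hA x hx⟩⟩,
    inBarClass_iff.2 ⟨r, hr, h.lastSlotOnly_graft⟩, fun u hu => ⟨Finset.mem_univ u, ?_⟩⟩
  obtain ⟨q, hq⟩ := removableOldLeaf_iff.1 hu
  obtain rfl | hqr := eq_or_ne q r
  · obtain ⟨hu, -⟩ := h.removableAt_graft_self_iff.1 hq
    have huA := hq.mem
    rw [h.grandChildren_graft] at huA
    exact absurd (hA u huA) hu.2
  · exact ⟨r, hr.1, hq.lt r hr.1 ((hr.2 hq.eq_none).lt_of_ne hqr)⟩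

lemma exists_graftsLast (hf : f ∈ forestsNoYoung α (k + 1)) (hs : ∃ w, IsSingleton f w) :
    ∃ g ∈ barForests k Finset.univ, GraftsLast f g := by
  obtain ⟨r, hr⟩ := exists_isGreatest (s := {w | IsSingleton f w}) hs
  have h : Graftable f r {x | f x = none ∧ r < x} := ⟨hr.1, fun x hx => hx.1, fun x hx => hx.2⟩
  have hg : GraftsLast f (graft r _ f) :=
    ⟨r, _, h, rfl, h.isGreatest_root_graft_iff.2 ⟨hr, rfl⟩⟩
  exact ⟨_, hg.mem_barForests_univ hf, hg⟩

lemma exists_graftsLast_of_mem_barForests (hg : g ∈ barForests k S) :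
    ∃ f ∈ forestsNoYoung α (k + 1), GraftsLast f g := by
  obtain ⟨⟨hforest, hyoung⟩, hbar, -⟩ := mem_barForests.1 hg
  obtain ⟨r, hr, hlast⟩ := inBarClass_iff.1 hbar
  have h := graftable_detach hforest hr.1
  have hgraft := graft_detach hlast
  rw [← hgraft] at hyoung
  refine ⟨detach r g, mem_forestsNoYoung.2 ⟨hforest.detach, (h.noYoungLeaf_graft_iff.1 hyoung).1⟩,
    r, _, h, hgraft.symm, hr, fun x hx => ?_⟩
  exact h.hasChild_of_graft_mem_barForests (hgraft.symm ▸ hg) (hgraft.symm ▸ hr) hx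

lemma GraftsLast.oleafStat_eq (hfg : GraftsLast f g) : oleafStat g = oleafStat f := by
  obtain ⟨r, A, h, rfl, -, hA⟩ := hfg
  exact h.oleafStat_graft_of_hasChild hA

lemma GraftsLast.card_activeSingletons_add_one (hfg : GraftsLast f g) :
    (activeSingletons Finset.univ g).card + 1 = siStat f := by
  obtain ⟨r, A, h, rfl, hA⟩ := hfg
  obtain ⟨hr, -⟩ := h.isGreatest_root_graft_iff.1 hA
  have herase : activeSingletons Finset.univ (graft r A f) =
      (Finset.univ.filter (IsSingleton f)).erase r := by
    ext v
    simp only [mem_activeSingletons, h.isSingleton_graft_iff, Finset.mem_univ, true_and,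
      Finset.mem_erase, Finset.mem_filter]
    constructor
    · rintro ⟨⟨hv, -⟩, x, hx, hvx⟩
      exact ⟨(hvx.trans_le (hA.1.2 hx)).ne, hv⟩
    · rintro ⟨hvr, hv⟩
      have hlt : v < r := (hr.2 hv).lt_of_ne hvr
      exact ⟨⟨hv, fun hvA => hlt.not_gt (h.lt v hvA), fun hvr' => absurd hvr' hvr⟩, r, hA.1.1, hlt⟩
  rw [herase, siStat_eq_card, Finset.card_erase_add_one (by simpa using h.isSingleton)]

lemma two_mul_oleafStat_add_card_activeSingletons_lt (hf : f ∈ barForests k S) :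
    2 * oleafStat f + (activeSingletons S f).card < Fintype.card α := by
  obtain ⟨e, he, hef⟩ := exists_graftsLast_of_mem_barForests hf
  have hcard := (mem_forestsNoYoung.1 he).2.card_eq
  have hsub : (activeSingletons S f).card ≤ (activeSingletons Finset.univ f).card :=
    Finset.card_le_card (Finset.filter_subset_filter _ (Finset.subset_univ S))
  have hactive := hef.card_activeSingletons_add_one
  have hleaf := hef.oleafStat_eq
  omega

lemma sum_qNumber_siStat_eq_sum_barWeight_univ :
    ∑ f ∈ forestsNoYoung α (k + 1),
        X ^ oleafStat f * (1 + X) ^ ointStat f * qNumber R (siStat f) =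
      ∑ f ∈ barForests k (Finset.univ : Finset α), barWeight R Finset.univ f := by
  have hsingle : ∀ f ∈ forestsNoYoung α (k + 1),
      X ^ oleafStat f * (1 + X) ^ ointStat f * qNumber R (siStat f) ≠ 0 → ∃ w, IsSingleton f w := by
    intro f _ hne
    by_contra! hnone
    refine hne ?_
    simp [siStat_eq_card, hnone, qNumber]
  rw [← Finset.sum_filter_of_ne hsingle]
  refine sum_eq_sum_of_biUnique biUnique_graftsLast (fun f hf => ?_) (fun g hg => ?_)
    fun f hf g _ hfg => ?_
  · obtain ⟨hf, hs⟩ := Finset.mem_filter.1 hf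
    exact exists_graftsLast hf hs
  · obtain ⟨f, hf, hfg⟩ := exists_graftsLast_of_mem_barForests hg
    refine ⟨f, Finset.mem_filter.2 ⟨hf, ?_⟩, hfg⟩
    obtain ⟨r, A, h, -⟩ := hfg
    exact ⟨r, h.isSingleton⟩
  · have hcard := (mem_forestsNoYoung.1 (Finset.mem_filter.1 hf).1).2.card_eq
    have hactive := hfg.card_activeSingletons_add_one
    have hoint : Fintype.card α - 1 - 2 * oleafStat f - (activeSingletons Finset.univ g).card =
        ointStat f := by omega
    rw [barWeight, hfg.oleafStat_eq, hoint, hactive]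

namespace Graftable

variable (h : Graftable f r A) (hu : RemovableAt (graft r A f) u r) (hlater : HasLaterRoot f u)
  (hS : ∀ v, v ∈ S ↔ v < u)
include h hu hlater hS

lemma graft_mem_barForests_insert_iff :
    graft r A f ∈ barForests k (insert u S) ↔ f ∈ barForests k S := by
  obtain ⟨hsu, ⟨⟨-, hru⟩, -⟩, hA⟩ := h.removableAt_graft_self_iff.1 hu
  have hle : ∀ x ∈ A, x ≤ u := fun x hx => (hA ▸ hx : _ ∧ _).2.2
  have hmax : IsGreatest A u := ⟨hA ▸ ⟨hsu.1, hru, le_rfl⟩, hle⟩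
  have hchild : ∀ x ∈ A, ¬ IsGreatest A x → hasChild f x := fun x hx hx' => by
    rw [← h.hasChild_graft_iff_of_mem hx]
    exact hu.hasChild_of_mem x (h.grandChildren_graft.symm ▸ hx) fun hxu => hx' (hxu ▸ hmax)
  have hlater' : HasLaterRoot (graft r A f) u := (hasLaterRoot_graft_iff hle).2 hlater
  rw [mem_barForests, mem_barForests, h.isForest_graft_iff, h.noYoungLeaf_graft_iff,
    and_iff_left hchild, h.inBarClass_graft_iff hle hru hlater]
  refine and_congr_right fun ⟨hforest, _⟩ => and_congr_right fun _ => ?_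
  refine ⟨fun hg v hv => ?_, fun hf v hv => ?_⟩
  · obtain ⟨q, hq⟩ := removableOldLeaf_iff.1 hv
    rcases h.removableAt_of_lt_or_removableAt_graft hu hq with hvu | ⟨hq', huq⟩
    · exact ⟨(hS v).2 hvu, hlater.of_le hvu.le⟩
    · have hmem := (hg v (removableOldLeaf_iff.2 ⟨q, hq'⟩)).1
      have huv := huq.trans (hq.lt_of_isForest hforest)
      rw [Finset.mem_insert, hS] at hmem
      exact absurd hmem (not_or_intro huv.ne' huv.not_gt)
  · obtain ⟨q, hq⟩ := removableOldLeaf_iff.1 hv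
    rcases h.eq_or_removableAt_of_graft hu hq with rfl | hq'
    · exact ⟨Finset.mem_insert_self _ S, hlater'⟩
    · have hvS := (hf v (removableOldLeaf_iff.2 ⟨q, hq'⟩)).1
      exact ⟨Finset.mem_insert_of_mem hvS, hlater'.of_le ((hS v).1 hvS).le⟩

end Graftable

lemma barForests_mono {T : Finset α} (hST : S ⊆ T) : barForests k S ⊆ barForests k T :=
  fun _ hf => by
    obtain ⟨hyoung, hbar, hremovable⟩ := mem_barForests.1 hf
    exact mem_barForests.2
      ⟨hyoung, hbar, fun v hv => ⟨hST (hremovable v hv).1, (hremovable v hv).2⟩⟩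

lemma filter_not_removableOldLeaf_barForests_insert (huS : u ∉ S) :
    (barForests k (insert u S)).filter (fun f => ¬ removableOldLeaf f u) = barForests k S := by
  ext f
  rw [Finset.mem_filter]
  refine ⟨fun ⟨hf, hu⟩ => ?_, fun hf => ⟨barForests_mono (Finset.subset_insert u S) hf,
    fun hu => huS ((mem_barForests.1 hf).2.2 u hu).1⟩⟩
  obtain ⟨hyoung, hbar, hremovable⟩ := mem_barForests.1 hf
  refine mem_barForests.2 ⟨hyoung, hbar, fun v hv => ?_⟩
  obtain ⟨hvS, hlater⟩ := hremovable v hv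
  exact ⟨Finset.mem_of_mem_insert_of_ne hvS fun hvu => hu (hvu ▸ hv), hlater⟩

lemma barWeight_sub_barWeight_insert (hf : f ∈ barForests k S) (huS : u ∉ S) :
    barWeight R S f - barWeight R (insert u S) f =
      if IsSingleton f u ∧ HasLaterRoot f u then
        X ^ (oleafStat f + 1) *
          (1 + X) ^ (Fintype.card α - 2 - 2 * oleafStat f - (activeSingletons S f).card) *
          qNumber R (activeSingletons S f).card
      else 0 := by
  split_ifs with hu
  · have hactive : (activeSingletons (insert u S) f).card = (activeSingletons S f).card + 1 := by
      rw [activeSingletons, Finset.filter_insert, if_pos hu, Finset.card_insert_of_notMem]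
      · rfl
      · exact fun hu' => huS (Finset.mem_filter.1 hu').1
    have hins := barForests_mono (Finset.subset_insert u S) hf
    obtain ⟨m, hm⟩ : ∃ m, Fintype.card α = 2 * oleafStat f + (activeSingletons S f).card + 2 + m :=
      Nat.exists_eq_add_of_le <| by
        have := two_mul_oleafStat_add_card_activeSingletons_lt hins
        omega
    have hS : Fintype.card α - 1 - 2 * oleafStat f - (activeSingletons S f).card = m + 1 := by omega
    have hS' : Fintype.card α - 1 - 2 * oleafStat f - ((activeSingletons S f).card + 1) = m := by
      omega
    have hS'' : Fintype.card α - 2 - 2 * oleafStat f - (activeSingletons S f).card = m := by omega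
    rw [barWeight, barWeight, hactive, hS, hS', hS'']
    linear_combination X ^ oleafStat f * (1 + X) ^ m *
      one_add_X_mul_qNumber_succ (R := R) (activeSingletons S f).card
  · have hactive : activeSingletons (insert u S) f = activeSingletons S f := by
      rw [activeSingletons, Finset.filter_insert, if_neg hu, activeSingletons]
    rw [barWeight, barWeight, hactive, sub_self]

lemma exists_graftsUpTo (hS : ∀ v, v ∈ S ↔ v < u) (hf : f ∈ barForests k S)
    (hu : IsSingleton f u) (hlater : HasLaterRoot f u) (hne : (activeSingletons S f).Nonempty) :
    ∃ g ∈ (barForests k (insert u S)).filter (removableOldLeaf · u), GraftsUpTo u f g := by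
  obtain ⟨v, hv⟩ := hne
  obtain ⟨hvS, hsv, -⟩ := mem_activeSingletons.1 hv
  obtain ⟨r, hr⟩ := exists_isGreatest (s := {w | IsSingleton f w ∧ w < u}) ⟨v, hsv, (hS v).1 hvS⟩
  have h : Graftable f r {x | f x = none ∧ r < x ∧ x ≤ u} :=
    ⟨hr.1.1, fun x hx => hx.1, fun x hx => hx.2.1⟩
  have hremovable := h.removableAt_graft_self_iff.2 ⟨hu, hr, rfl⟩
  refine ⟨_, Finset.mem_filter.2 ⟨(h.graft_mem_barForests_insert_iff hremovable hlater hS).2 hf,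
    removableOldLeaf_iff.2 ⟨r, hremovable⟩⟩, r, _, h, rfl, hremovable⟩

lemma exists_graftsUpTo_of_removableOldLeaf (hS : ∀ v, v ∈ S ↔ v < u)
    (hg : g ∈ barForests k (insert u S)) (hu : removableOldLeaf g u) :
    ∃ f ∈ barForests k S, GraftsUpTo u f g ∧ IsSingleton f u ∧ HasLaterRoot f u := by
  obtain ⟨r, hr⟩ := removableOldLeaf_iff.1 hu
  obtain ⟨⟨hforest, -⟩, -, hremovable⟩ := mem_barForests.1 hg
  have h := graftable_detach hforest hr.eq_none
  have hgraft := graft_detach hr.lastSlotOnly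
  have hlater := (hremovable u hu).2
  rw [← hgraft] at hr hg hlater
  obtain ⟨hsu, -, hA⟩ := h.removableAt_graft_self_iff.1 hr
  have hlater' := (hasLaterRoot_graft_iff fun x hx => (hA ▸ hx : _ ∧ _).2.2).1 hlater
  exact ⟨detach r g, (h.graft_mem_barForests_insert_iff hr hlater' hS).1 hg,
    ⟨r, _, h, hgraft.symm, hgraft.symm ▸ hr⟩, hsu, hlater'⟩

lemma GraftsUpTo.barWeight_insert (hfg : GraftsUpTo u f g) (hS : ∀ v, v ∈ S ↔ v < u)
    (hlater : HasLaterRoot f u) :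
    barWeight R (insert u S) g = X ^ (oleafStat f + 1) *
      (1 + X) ^ (Fintype.card α - 2 - 2 * oleafStat f - (activeSingletons S f).card) *
      qNumber R (activeSingletons S f).card := by
  obtain ⟨r, A, h, rfl, hu⟩ := hfg
  obtain ⟨hsu, ⟨⟨hsr, hru⟩, -⟩, hA⟩ := h.removableAt_graft_self_iff.1 hu
  have hmax : IsGreatest A u := hA ▸ ⟨⟨hsu.1, hru, le_rfl⟩, fun x hx => hx.2.2⟩
  have hr : r ∈ activeSingletons S f :=
    mem_activeSingletons.2 ⟨(hS r).2 hru, hsr, hlater.of_le hru.le⟩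
  have hcard := Finset.card_erase_add_one hr
  rw [← h.activeSingletons_insert_graft hu hlater hS] at hcard
  have hexp : Fintype.card α - 1 - 2 * (oleafStat f + 1) -
      (activeSingletons (insert u S) (graft r A f)).card =
        Fintype.card α - 2 - 2 * oleafStat f - (activeSingletons S f).card := by omega
  rw [barWeight, h.oleafStat_graft_of_isGreatest hmax hsu.2, hexp, hcard]

lemma sum_barWeight_removableOldLeaf (hS : ∀ v, v ∈ S ↔ v < u) :
    ∑ g ∈ (barForests k (insert u S)).filter (removableOldLeaf · u), barWeight R (insert u S) g =
      ∑ f ∈ barForests k S, (barWeight R S f - barWeight R (insert u S) f) := by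
  have huS : u ∉ S := fun hu => ((hS u).1 hu).false
  have hactive : ∀ f ∈ barForests k S, barWeight R S f - barWeight R (insert u S) f ≠ 0 →
      IsSingleton f u ∧ HasLaterRoot f u ∧ (activeSingletons S f).Nonempty := fun f hf hne => by
    rw [barWeight_sub_barWeight_insert hf huS, ne_eq, ite_eq_right_iff, Classical.not_imp] at hne
    refine ⟨hne.1.1, hne.1.2, Finset.nonempty_iff_ne_empty.2 fun hempty => hne.2 ?_⟩
    simp [hempty, qNumber]
  rw [← Finset.sum_filter_of_ne hactive]
  symm
  refine sum_eq_sum_of_biUnique (biUnique_graftsUpTo (u := u)) (fun f hf => ?_) (fun g hg => ?_)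
    fun f hf g _ hfg => ?_
  · obtain ⟨hf, hu, hlater, hne⟩ := Finset.mem_filter.1 hf
    exact exists_graftsUpTo hS hf hu hlater hne
  · obtain ⟨hg, hu⟩ := Finset.mem_filter.1 hg
    obtain ⟨f, hf, hfg, hsu, hlater⟩ := exists_graftsUpTo_of_removableOldLeaf hS hg hu
    refine ⟨f, Finset.mem_filter.2 ⟨hf, hsu, hlater, ?_⟩, hfg⟩
    obtain ⟨r, A, h, rfl, hu⟩ := hfg
    obtain ⟨-, ⟨⟨hsr, hru⟩, -⟩, -⟩ := h.removableAt_graft_self_iff.1 hu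
    exact ⟨r, mem_activeSingletons.2 ⟨(hS r).2 hru, hsr, hlater.of_le hru.le⟩⟩
  · obtain ⟨hf, hu, hlater, -⟩ := Finset.mem_filter.1 hf
    rw [barWeight_sub_barWeight_insert hf huS, if_pos ⟨hu, hlater⟩,
      hfg.barWeight_insert hS hlater]

lemma sum_barWeight_insert (hS : ∀ v, v ∈ S ↔ v < u) :
    ∑ f ∈ barForests k (insert u S), barWeight R (insert u S) f =
      ∑ f ∈ barForests k S, barWeight R S f := by
  rw [← Finset.sum_filter_add_sum_filter_not _ (removableOldLeaf · u),
    filter_not_removableOldLeaf_barForests_insert fun hu => ((hS u).1 hu).false,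
    sum_barWeight_removableOldLeaf hS, ← Finset.sum_add_distrib]
  exact Finset.sum_congr rfl fun f _ => sub_add_cancel _ _

variable (α k R) in
lemma sum_barWeight_univ :
    ∑ f ∈ barForests k (Finset.univ : Finset α), barWeight R Finset.univ f =
      ∑ f ∈ barForests k (∅ : Finset α), barWeight R ∅ f := by
  have hlower : ∀ S : Finset α, IsLowerSet (S : Set α) →
      ∑ f ∈ barForests k S, barWeight R S f = ∑ f ∈ barForests k ∅, barWeight R ∅ f := fun S => by
    induction S using Finset.induction_on_max with
    | empty => exact fun _ => rfl
    | insert u S hmax ih =>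
      intro hlower
      have hS : ∀ v, v ∈ S ↔ v < u := fun v => by
        refine ⟨hmax v, fun hv => Finset.mem_of_mem_insert_of_ne ?_ hv.ne⟩
        exact hlower hv.le (Finset.mem_insert_self u S)
      rw [sum_barWeight_insert hS]
      refine ih fun v w hwv hv => ?_
      exact (hS w).2 (hwv.trans_lt (hmax v hv))
  exact hlower Finset.univ fun _ _ _ _ => Finset.mem_univ _

end Elimination

/-! ### Symmetric decompositions and the γ-expansion -/

section Reflect

variable {R : Type*}

lemma reflect_succ_of_natDegree_le [Semiring R] {p : R[X]} {n : ℕ} (hp : p.natDegree ≤ n) :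
    p.reflect (n + 1) = X * p.reflect n := by
  have h := reflect_mul (1 : R[X]) p (F := 1) (G := n) (by simp) hp
  rwa [one_mul, add_comm 1 n, ← C_1, reflect_C, C_1, one_mul, pow_one] at h

lemma reflect_X_mul_of_natDegree_le [Semiring R] {p : R[X]} {n : ℕ} (hp : p.natDegree ≤ n) :
    (X * p).reflect (n + 2) = X * p.reflect n := by
  have h := reflect_mul X p (F := 1) (G := n + 1) natDegree_X_le (hp.trans n.le_succ)
  rwa [reflect_one_X, one_mul, reflect_succ_of_natDegree_le hp, add_comm 1 (n + 1)] at h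

lemma reflect_one_add_X_pow [Semiring R] (m : ℕ) :
    ((1 + X : R[X]) ^ m).reflect m = (1 + X) ^ m := by
  have hX : (1 + X : R[X]).natDegree ≤ 1 := by compute_degree
  induction m with
  | zero => rw [pow_zero, ← C_1, reflect_C, pow_zero, mul_one]
  | succ m ih =>
    have hreflect : (1 + X : R[X]).reflect 1 = 1 + X := by
      rw [reflect_add, reflect_one_X, ← C_1, reflect_C, C_1, one_mul, pow_one, add_comm]
    rw [pow_succ, reflect_mul _ _ (by simpa using natDegree_pow_le_of_le m hX) hX, ih, hreflect]

lemma reflect_X_pow_mul_one_add_X_pow [Semiring R] (i m j : ℕ) :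
    (X ^ i * (1 + X : R[X]) ^ m).reflect (2 * i + m + j) = X ^ (i + j) * (1 + X) ^ m := by
  have hX : (1 + X : R[X]).natDegree ≤ 1 := by compute_degree
  rw [show 2 * i + m + j = (2 * i + j) + m by ring,
    reflect_mul _ _ ((natDegree_X_pow_le i).trans (by omega))
      (by simpa using natDegree_pow_le_of_le m hX),
    reflect_one_add_X_pow, reflect_monomial, revAt_le (by omega),
    show 2 * i + j - i = i + j by omega]

lemma reflect_sum [Semiring R] {ι : Type*} (s : Finset ι) (p : ι → R[X]) (N : ℕ) :
    (∑ i ∈ s, p i).reflect N = ∑ i ∈ s, (p i).reflect N :=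
  map_sum (⟨⟨reflect N, reflect_zero⟩, fun p q => reflect_add p q N⟩ : R[X] →+ R[X]) p s

lemma sub_reflect_eq_one_sub_X_mul [CommRing R] {n : ℕ} {A a b : R[X]} (hA : A.natDegree ≤ n)
    (hdec : A = a + X * b) (ha : a.natDegree ≤ n) (ha' : a.reflect n = a)
    (hb : b.natDegree ≤ n - 1) (hb' : b.reflect (n - 1) = b) :
    A - A.reflect (n + 1) = (1 - X) * a := by
  have hXb : (X * b).reflect (n + 1) = X * b := by
    obtain _ | m := n
    · have hzero : b = 0 := by
        have hcoeff : A.coeff 1 = a.coeff 1 + b.coeff 0 := by rw [hdec, coeff_add, coeff_X_mul]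
        rw [coeff_eq_zero_of_natDegree_lt (hA.trans_lt one_pos),
          coeff_eq_zero_of_natDegree_lt (ha.trans_lt one_pos), zero_add] at hcoeff
        rw [eq_C_of_natDegree_le_zero hb, ← hcoeff, C_0]
      rw [hzero, mul_zero, reflect_zero]
    · exact (reflect_X_mul_of_natDegree_le hb).trans (congrArg (X * ·) hb')
  rw [hdec, reflect_add, hXb, reflect_succ_of_natDegree_le ha, ha']
  ring

end Reflect

lemma natDegree_Apoly_succ_le (k n : ℕ) : (Apoly k (n + 1)).natDegree ≤ n := by
  rw [Apoly_eq_sum_forests]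
  refine natDegree_sum_le_of_forall_le _ _ fun f hf => (natDegree_X_pow_le _).trans ?_
  have hroot : f 0 = none := by
    by_contra hne
    obtain ⟨⟨y, s⟩, hy⟩ := Option.ne_none_iff_exists'.1 hne
    exact (mem_forests.1 hf 0 y s hy).not_ge (Fin.zero_le y)
  have hsub : (Finset.univ.filter fun x => f x ≠ none ∧ ¬ hasChild f x) ⊆ Finset.univ.erase 0 :=
    fun x hx => Finset.mem_erase.2
      ⟨fun hx0 => (Finset.mem_filter.1 hx).2.1 (hx0 ▸ hroot), Finset.mem_univ x⟩
  simpa [nonrootLeafCount] using Finset.card_le_card hsub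

lemma Apoly_sub_reflect (k n : ℕ) :
    Apoly (k + 1) n - (Apoly (k + 1) n).reflect n = (1 - X) * ∑ f ∈ forestsNoYoung (Fin n) (k + 1),
      X ^ oleafStat f * (1 + X) ^ ointStat f * qNumber ℝ (siStat f) := by
  rw [Apoly_eq_sum_forests, sum_forests_X_pow_eq_sum_forestsNoYoung, reflect_sum,
    ← Finset.sum_sub_distrib, Finset.mul_sum]
  refine Finset.sum_congr rfl fun f hf => ?_
  have hcard := (mem_forestsNoYoung.1 hf).2.card_eq
  rw [Fintype.card_fin] at hcard
  have hreflect := reflect_X_pow_mul_one_add_X_pow (R := ℝ) (oleafStat f) (ointStat f) (siStat f)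
  rw [← hcard] at hreflect
  have hgeom : (1 - X) * qNumber ℝ (siStat f) = 1 - X ^ siStat f := mul_neg_geom_sum X _
  rw [hreflect, pow_add]
  linear_combination -(X ^ oleafStat f * (1 + X) ^ ointStat f) * hgeom

section Gamma

variable {α : Type} [LinearOrder α] [Fintype α] {k : ℕ} {f : ParentMap α (k + 1)}
  {R : Type*} [CommRing R]

lemma mem_barForests_empty : f ∈ barForests k ∅ ↔
    (IsForest f ∧ NoYoungLeaf f) ∧ inBarClass f ∧ ∀ u, ¬ removableOldLeaf f u := by
  simp [mem_barForests]

lemma barWeight_empty (f : ParentMap α (k + 1)) :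
    barWeight R ∅ f = X ^ oleafStat f * (1 + X) ^ (Fintype.card α - 1 - 2 * oleafStat f) := by
  simp [barWeight, activeSingletons, qNumber]

lemma sum_barWeight_empty :
    ∑ f ∈ barForests k (∅ : Finset α), barWeight R ∅ f =
      ∑ i ∈ Finset.range ((Fintype.card α - 1) / 2 + 1),
        C ((Nat.card {f : α → Option (α × Fin (k + 1)) //
          IsForest f ∧ inBarClass f ∧ oleafStat f = i ∧ NoYoungLeaf f ∧
            ∀ u, ¬ removableOldLeaf f u} : ℕ) : R) *
          X ^ i * (1 + X) ^ (Fintype.card α - 1 - 2 * i) := by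
  have hrange : ∀ f ∈ barForests k (∅ : Finset α),
      oleafStat f ∈ Finset.range ((Fintype.card α - 1) / 2 + 1) := fun f hf => by
    have hlt := two_mul_oleafStat_add_card_activeSingletons_lt hf
    rw [Finset.mem_range]
    omega
  rw [← Finset.sum_fiberwise_of_maps_to hrange]
  refine Finset.sum_congr rfl fun i _ => ?_
  have hcard : Nat.card {f : α → Option (α × Fin (k + 1)) //
      IsForest f ∧ inBarClass f ∧ oleafStat f = i ∧ NoYoungLeaf f ∧ ∀ u, ¬ removableOldLeaf f u} =
        ((barForests k (∅ : Finset α)).filter fun f => oleafStat f = i).card := by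
    rw [Nat.card_eq_fintype_card]
    refine Fintype.card_of_subtype _ fun f => ?_
    rw [Finset.mem_filter, mem_barForests_empty]
    tauto
  have hconst : ∀ f ∈ (barForests k (∅ : Finset α)).filter fun f => oleafStat f = i,
      barWeight R ∅ f = X ^ i * (1 + X) ^ (Fintype.card α - 1 - 2 * i) := fun f hf => by
    rw [barWeight_empty, (Finset.mem_filter.1 hf).2]
  rw [Finset.sum_congr rfl hconst, Finset.sum_const, hcard, nsmul_eq_mul, map_natCast, mul_assoc]

end Gamma

/-- The first half of the main theorem: in the symmetric decomposition
`A_n^{(k)} = a + x·b` (with `a` palindromic of degree at most `n-1` and `b` palindromic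
of degree at most `n-2`), the part `a` is γ-positive with center `(n-1)/2`:
`a = Σ_{i=0}^{⌊(n-1)/2⌋} γ̄_{n,k,i} x^i (1+x)^{n-1-2i}`, where `γ̄_{n,k,i}` counts the
increasing pruned even `k`-ary forests on `{1,…,n}` whose rightmost tree is a singleton
or has its first `k-1` root-children as leaves, with `i` old leaves, no young leaves,
and no removable old leaves. -/
theorem a_part_gamma_positive (n k : ℕ) (hn : 1 ≤ n) (hk : 1 ≤ k)
    (a b : Polynomial ℝ)
    (hdec : Apoly k n = a + X * b)
    (ha1 : a.natDegree ≤ n - 1) (ha2 : a.reflect (n - 1) = a)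
    (hb1 : b.natDegree ≤ n - 2) (hb2 : b.reflect (n - 2) = b) :
    a = ∑ i ∈ Finset.range ((n - 1) / 2 + 1),
      C ((Nat.card {f : Fin n → Option (Fin n × Fin k) //
            IsForest f ∧ inBarClass f ∧ oleafStat f = i ∧ NoYoungLeaf f ∧
              ∀ u, ¬ removableOldLeaf f u} : ℕ) : ℝ) *
        X ^ i * (1 + X) ^ (n - 1 - 2 * i) := by
  obtain ⟨n, rfl⟩ := Nat.exists_eq_add_of_le' hn
  obtain ⟨k, rfl⟩ := Nat.exists_eq_add_of_le' hk
  have hsub : (1 - X) * _ = (1 - X) * a := (Apoly_sub_reflect k (n + 1)).symm.trans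
    (sub_reflect_eq_one_sub_X_mul (natDegree_Apoly_succ_le _ n) hdec ha1 ha2 hb1 hb2)
  have hX : (1 - X : ℝ[X]) ≠ 0 := sub_ne_zero.2 (X_ne_C 1).symm
  rw [← mul_left_cancel₀ hX hsub, sum_qNumber_siStat_eq_sum_barWeight_univ, sum_barWeight_univ,
    sum_barWeight_empty, Fintype.card_fin]

end
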